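/- arXiv:2501.00667 — 2 statements merged into one kernel-verified Lean document; each statement's English description precedes it below -/
import Mathlib

section
/- Let P ⊂ ℝ² be a rational convex polygon such that the number of lattice points on the boundary of tP equals t times the number of lattice points on the boundary of P for every positive integer t (in particular, this holds whenever P is pseudointegral). Then every edge of P is reticular: for each one-dimensional exposed face E of P, the affine span of E contains a point of ℤ². -/
open Set Pointwise

/-- The set of lattice points of the plane. -/
def latticePts : Set (ℝ × ℝ) := {p | ∃ m n : ℤ, p = ((m : ℝ), (n : ℝ))}

/-- The coercion of a rational point of the plane to a real point. -/
def qpt (v : ℚ × ℚ) : ℝ × ℝ := ((v.1 : ℝ), (v.2 : ℝ))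

/-- The Ehrhart function of a set `P ⊆ ℝ²`:  `t ↦ #(tP ∩ ℤ²)`. -/
noncomputable def ehr (P : Set (ℝ × ℝ)) (t : ℕ) : ℕ :=
  (((t : ℝ) • P) ∩ latticePts).ncard

/-- A set `P ⊆ ℝ²` is pseudointegral (a PIP) if its Ehrhart function agrees with
a polynomial at all positive integers. -/
def IsPIP (P : Set (ℝ × ℝ)) : Prop :=
  ∃ c : Polynomial ℚ, ∀ t : ℕ, 0 < t → (ehr P t : ℚ) = c.eval (t : ℚ)

/-- A rational triangle: the convex hull of three non-collinear rational points. -/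
def IsRatTriangle (T : Set (ℝ × ℝ)) : Prop :=
  ∃ p q r : ℚ × ℚ, ¬ Collinear ℝ ({qpt p, qpt q, qpt r} : Set (ℝ × ℝ)) ∧
    T = convexHull ℝ {qpt p, qpt q, qpt r}

/-- A rational convex polygon: the convex hull of a finite set of rational
points, with nonempty interior in ℝ². -/
def IsRatPolygon (P : Set (ℝ × ℝ)) : Prop :=
  ∃ V : Finset (ℚ × ℚ), P = convexHull ℝ (qpt '' (V : Set (ℚ × ℚ))) ∧
    (interior P).Nonempty

/-- An edge of `P`: a one-dimensional exposed face of `P`. -/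
def IsEdge (P E : Set (ℝ × ℝ)) : Prop :=
  IsExposed ℝ P E ∧ Module.finrank ℝ (vectorSpan ℝ E) = 1

/-!
Choose `D > 0` such that `D • v` is a lattice point for every vertex `v` of `P`, and compare the
boundaries of the dilates by `t = D k + 1` and `T = D (k + 2) = t + (2 D - 1)` edge by edge. If an
edge `F` is reticular, then `(2 D - 1) • F` contains a lattice point `w`, and translation by `w`
injects the lattice points in the relative interior of `t • F` into those of `T • F`. If `F` is not
reticular, then `t • F` contains no lattice point, because `t ≡ 1` modulo `D`, while the relative
interior of `T • F` contains at least `k + 1` of them. Hence a nonreticular edge makes the number of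
boundary lattice points grow by at least `k + 1`, up to the number of vertices, whereas the
hypothesis makes it grow by `2 D - 1` times a constant; this is absurd for large `k`.
-/

section Segment

variable {E : Type*} [AddCommGroup E] [Module ℝ E] {p q x y : E}

lemma mem_smul_openSegment_iff {t : ℝ} (ht : 0 < t) :
    x ∈ t • openSegment ℝ p q ↔ ∃ a b : ℝ, 0 < a ∧ 0 < b ∧ a + b = t ∧ a • p + b • q = x := by
  constructor
  · rintro ⟨_, ⟨a, b, ha, hb, hab, rfl⟩, rfl⟩
    exact ⟨t * a, t * b, by positivity, by positivity, by rw [← mul_add, hab, mul_one],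
      by simp only [smul_add, smul_smul]⟩
  · rintro ⟨a, b, ha, hb, rfl, rfl⟩
    refine ⟨_, ⟨a / (a + b), b / (a + b), by positivity, by positivity, by field_simp, rfl⟩, ?_⟩
    simp only [smul_add, smul_smul, mul_div_cancel₀ _ ht.ne']

lemma mem_smul_segment {a b : ℝ} (ha : 0 ≤ a) (hb : 0 ≤ b) (hab : 0 < a + b) :
    a • p + b • q ∈ (a + b) • segment ℝ p q := by
  refine ⟨_, ⟨a / (a + b), b / (a + b), by positivity, by positivity, by field_simp, rfl⟩, ?_⟩
  simp only [smul_add, smul_smul, mul_div_cancel₀ _ hab.ne']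

lemma add_mem_smul_openSegment {s t : ℝ} (hs : 0 < s) (ht : 0 ≤ t)
    (hx : x ∈ s • openSegment ℝ p q) (hy : y ∈ t • segment ℝ p q) :
    x + y ∈ (s + t) • openSegment ℝ p q := by
  obtain ⟨a, b, ha, hb, rfl, rfl⟩ := (mem_smul_openSegment_iff hs).1 hx
  obtain ⟨_, ⟨c, d, hc, hd, hcd, rfl⟩, rfl⟩ := hy
  refine (mem_smul_openSegment_iff (by positivity)).2
    ⟨a + t * c, b + t * d, by positivity, by positivity, by linear_combination t * hcd, ?_⟩
  module

lemma left_mem_extremePoints_segment (p q : E) : p ∈ (segment ℝ p q).extremePoints ℝ := by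
  refine mem_extremePoints_iff_left.2 ⟨left_mem_segment ℝ p q, ?_⟩
  simp only [segment_eq_image']
  rintro _ ⟨s, ⟨hs, -⟩, rfl⟩ _ ⟨r, ⟨hr, -⟩, rfl⟩ ⟨a, b, ha, hb, hab, h⟩
  have hcomb : (a * s + b * r) • (q - p) = 0 := by
    obtain rfl : b = 1 - a := by linarith
    linear_combination (norm := module) h
  rcases smul_eq_zero.1 hcomb with hsr | hqp
  · obtain rfl : s = 0 := by nlinarith [mul_nonneg ha.le hs, mul_nonneg hb.le hr]
    simp
  · simp [hqp]

lemma extremePoints_segment (p q : E) : (segment ℝ p q).extremePoints ℝ = {p, q} := by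
  refine Subset.antisymm ?_ (insert_subset (left_mem_extremePoints_segment p q) ?_)
  · rw [← convexHull_pair]
    exact extremePoints_convexHull_subset
  · rw [singleton_subset_iff, segment_symm]
    exact left_mem_extremePoints_segment q p

lemma segment_sdiff_endpoints (hpq : p ≠ q) : segment ℝ p q \ {p, q} = openSegment ℝ p q := by
  ext x
  constructor
  · rintro ⟨hx, hxpq⟩
    rw [mem_insert_iff, mem_singleton_iff, not_or] at hxpq
    exact mem_openSegment_of_ne_left_right (Ne.symm hxpq.1) (Ne.symm hxpq.2) hx
  · refine fun hx => ⟨openSegment_subset_segment ℝ p q hx, ?_⟩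
    rintro (rfl | rfl)
    · exact hpq (left_mem_openSegment_iff.1 hx)
    · exact hpq (right_mem_openSegment_iff.1 hx)

lemma affineSpan_segment (p q : E) :
    affineSpan ℝ (segment ℝ p q) = line[ℝ, p, q] := by
  rw [← convexHull_pair, affineSpan_convexHull]

end Segment

section LatticeCount

variable {E : Type*} [AddCommGroup E] [Module ℝ E] {L : AddSubgroup E} {p q : E} {D : ℕ}

-- Modulo `D • (q - p)`, a lattice point of the line is `(1 - r) • p + r • q` with `0 ≤ r < D`;
-- its reflection in the midpoint of `[D • p, D • q]` then has nonnegative coefficients.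
lemma exists_mem_smul_segment_of_mem_affineSpan (hD : 0 < D) (hp : D • p ∈ L) (hq : D • q ∈ L)
    {z : E} (hz : z ∈ line[ℝ, p, q]) (hzL : z ∈ L) :
    ∃ w ∈ L, w ∈ (2 * D - 1 : ℝ) • segment ℝ p q := by
  obtain ⟨s, rfl⟩ := mem_affineSpan_pair_iff_exists_lineMap_eq.1 hz
  have hD' : (0 : ℝ) < D := by exact_mod_cast hD
  have hD1 : (1 : ℝ) ≤ D := by exact_mod_cast hD
  set r : ℝ := D * Int.fract (s / D)
  have hr0 : 0 ≤ r := by positivity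
  have hrD : r < D := mul_lt_of_lt_one_right hD' (Int.fract_lt_one _)
  have hrs : r = s - D * ⌊s / D⌋ := by
    simp only [r, Int.fract]
    field_simp
  refine ⟨D • p + D • q - AffineMap.lineMap p q s + ⌊s / D⌋ • (D • q - D • p),
    L.add_mem (L.sub_mem (L.add_mem hp hq) hzL) (L.zsmul_mem (L.sub_mem hq hp) _), ?_⟩
  convert mem_smul_segment (p := p) (q := q) (a := D - 1 + r) (b := D - r)
    (by linarith) (by linarith) (by linarith) using 1
  · congr 1
    ring
  · rw [hrs, AffineMap.lineMap_apply_module]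
    module

lemma ncard_smul_openSegment_le_of_mem_affineSpan (hD : 0 < D) (hp : D • p ∈ L) (hq : D • q ∈ L)
    {z : E} (hz : z ∈ line[ℝ, p, q]) (hzL : z ∈ L) {t : ℝ} (ht : 0 < t)
    (hfin : ((t + (2 * D - 1)) • openSegment ℝ p q ∩ L).Finite) :
    (t • openSegment ℝ p q ∩ L).ncard ≤ ((t + (2 * D - 1)) • openSegment ℝ p q ∩ L).ncard := by
  obtain ⟨w, hwL, hw⟩ := exists_mem_smul_segment_of_mem_affineSpan hD hp hq hz hzL
  have hD1 : (1 : ℝ) ≤ D := by exact_mod_cast hD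
  exact ncard_le_ncard_of_injOn (· + w)
    (fun x hx => ⟨add_mem_smul_openSegment ht (by linarith) hx.1 hw, L.add_mem hx.2 hwL⟩)
    (add_left_injective w).injOn hfin

-- Subtracting the lattice point `k • D • p` moves the dilated segment back into the line.
lemma smul_openSegment_inter_eq_empty (hp : D • p ∈ L)
    (hline : ∀ z ∈ line[ℝ, p, q], z ∉ L) (k : ℕ) :
    ((D * k + 1 : ℝ) • openSegment ℝ p q ∩ L) = ∅ := by
  refine eq_empty_iff_forall_notMem.2 fun x ⟨hx, hxL⟩ => ?_
  obtain ⟨a, b, -, -, hab, rfl⟩ := (mem_smul_openSegment_iff (by positivity)).1 hx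
  refine hline _ (AffineMap.lineMap_mem_affineSpan_pair b p q) ?_
  convert L.sub_mem hxL (L.nsmul_mem hp k) using 1
  obtain rfl : a = D * k + 1 - b := by linarith
  rw [AffineMap.lineMap_apply_module]
  module

lemma le_ncard_smul_openSegment (hD : 0 < D) (hp : D • p ∈ L) (hq : D • q ∈ L) (hpq : p ≠ q)
    (m : ℕ) (hfin : ((D * (m + 1) : ℝ) • openSegment ℝ p q ∩ L).Finite) :
    m ≤ ((D * (m + 1) : ℝ) • openSegment ℝ p q ∩ L).ncard := by
  have hD' : (0 : ℝ) < D := by exact_mod_cast hD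
  let f : ℕ → E := fun i => (m + 1) • D • q + (i + 1) • D • (p - q)
  have hf_inj : Function.Injective f := by
    intro i j hij
    simpa [f, ← Nat.cast_smul_eq_nsmul ℝ, hD.ne', sub_ne_zero.2 hpq] using hij
  have hf_mem : ∀ i ∈ (Finset.range m : Set ℕ),
      f i ∈ (D * (m + 1) : ℝ) • openSegment ℝ p q ∩ L := by
    intro i hi
    have him : (i : ℝ) < m := by exact_mod_cast Finset.mem_range.1 hi
    refine ⟨(mem_smul_openSegment_iff (by positivity)).2
      ⟨D * (i + 1), D * (m - i), by positivity, mul_pos hD' (by linarith), by ring, ?_⟩, ?_⟩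
    · module
    · simp only [f, smul_sub D]
      exact L.add_mem (L.nsmul_mem hq _) (L.nsmul_mem (L.sub_mem hp hq) _)
  simpa using ncard_le_ncard_of_injOn f hf_mem hf_inj.injOn hfin

end LatticeCount

section Dilation

variable {E : Type*} [NormedAddCommGroup E] [NormedSpace ℝ E]

lemma frontier_smul {c : ℝ} (hc : c ≠ 0) (s : Set E) : frontier (c • s) = c • frontier s :=
  ((Homeomorph.smulOfNeZero c hc).image_frontier s).symm

lemma finite_smul_inter_of_isBounded [ProperSpace E] (L : AddSubgroup E) [DiscreteTopology L]
    {s : Set E} (hs : Bornology.IsBounded s) (c : ℝ) : (c • s ∩ L).Finite :=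
  Metric.finite_isBounded_inter_isClosed DiscreteTopology.isDiscrete (hs.smul₀ c)
    L.isClosed_of_discrete

end Dilation

section Faces

variable {E : Type*} [NormedAddCommGroup E] [NormedSpace ℝ E] {P : Set E} {x : E}

lemma exists_eq_segment_of_collinear {K : Set E} (hK : IsCompact K) (hconv : Convex ℝ K)
    (hne : K.Nonempty) (hcol : Collinear ℝ K) : ∃ p q, K = segment ℝ p q := by
  obtain ⟨⟨p, q⟩, ⟨hp, hq⟩, hmax⟩ :=
    (hK.prod hK).exists_isMaxOn (hne.prod hne) continuous_dist.continuousOn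
  refine ⟨p, q, Subset.antisymm (fun x hx => ?_) (hconv.segment_subset hp hq)⟩
  have hpq : ∀ a ∈ K, ∀ b ∈ K, dist a b ≤ dist p q := fun a ha b hb =>
    isMaxOn_iff.1 hmax (a, b) ⟨ha, hb⟩
  rw [mem_segment_iff_wbtw]
  have hcol3 : Collinear ℝ {p, x, q} := hcol.subset (by grind)
  rcases hcol3.wbtw_or_wbtw_or_wbtw with h | h | h
  · exact h
  · have hxq : x = q := dist_le_zero.1 (by
      linarith [h.dist_add_dist, hpq x hx p hp, dist_comm q p, dist_comm x p, dist_comm p q])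
    simp [hxq]
  · have hxp : x = p := dist_le_zero.1 (by
      linarith [h.dist_add_dist, hpq q hq x hx, dist_comm p x, dist_comm q p])
    simp [hxp]

lemma exists_mem_toExposed_of_mem_frontier (hconv : Convex ℝ P) (hclosed : IsClosed P)
    (hint : (interior P).Nonempty) (hx : x ∈ frontier P) :
    ∃ f : StrongDual ℝ E, f ≠ 0 ∧ x ∈ f.toExposed P := by
  obtain ⟨f, hf⟩ := geometric_hahn_banach_open_point hconv.interior isOpen_interior hx.2
  refine ⟨f, ?_, hclosed.frontier_subset hx, fun y hy => ?_⟩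
  · rintro rfl
    obtain ⟨y, hy⟩ := hint
    exact lt_irrefl _ (hf y hy)
  · have hP : P ⊆ closure (interior P) := by
      rw [hconv.closure_interior_eq_closure_of_nonempty_interior hint]
      exact subset_closure
    exact closure_minimal (fun a ha => (hf a ha).le)
      (isClosed_le f.continuous continuous_const) (hP hy)

lemma toExposed_subset_frontier {f : StrongDual ℝ E} (hf : f ≠ 0) :
    f.toExposed P ⊆ frontier P := by
  refine fun x hx => ⟨subset_closure hx.1, fun hxint => hf ?_⟩
  have hmax : IsLocalMax f x :=
    Filter.mem_of_superset (mem_interior_iff_mem_nhds.1 hxint) hx.2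
  exact hmax.hasFDerivAt_eq_zero f.hasFDerivAt

lemma vectorSpan_toExposed_le_ker (f : StrongDual ℝ E) (P : Set E) :
    vectorSpan ℝ (f.toExposed P) ≤ LinearMap.ker (f : E →ₗ[ℝ] ℝ) := by
  rw [vectorSpan_def, Submodule.span_le]
  rintro _ ⟨a, ha, b, hb, rfl⟩
  have hab : f a = f b := le_antisymm (hb.2 a ha.1) (ha.2 b hb.1)
  simp [hab]

lemma segment_subset_of_mem_openSegment {F : Set E} (hF : IsExtreme ℝ P F)
    (hconv : Convex ℝ F) {p q : E} (hp : p ∈ P) (hq : q ∈ P) (hx : x ∈ openSegment ℝ p q)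
    (hxF : x ∈ F) : segment ℝ p q ⊆ F :=
  hconv.segment_subset (hF.left_mem_of_mem_openSegment hp hq hxF hx)
    (hF.right_mem_of_mem_openSegment hp hq hxF hx)

end Faces

/-- A convex polygon in the plane, encoded as a convex body with finitely many extreme points, so
that no generating set of vertices is part of the data. -/
structure IsConvexPolygon (P : Set (ℝ × ℝ)) : Prop where
  convex : Convex ℝ P
  isCompact : IsCompact P
  nonempty_interior : (interior P).Nonempty
  finite_extremePoints : (P.extremePoints ℝ).Finite

section Edges

variable {P F G : Set (ℝ × ℝ)}

lemma IsEdge.nonempty (hF : IsEdge P F) : F.Nonempty := by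
  rw [nonempty_iff_ne_empty]
  rintro rfl
  have hdim := hF.2
  rw [vectorSpan_empty, finrank_bot] at hdim
  exact zero_ne_one hdim

lemma IsEdge.subset_frontier (hP : IsConvexPolygon P) (hF : IsEdge P F) : F ⊆ frontier P := by
  obtain ⟨f, rfl⟩ : ∃ f : StrongDual ℝ (ℝ × ℝ), F = f.toExposed P := hF.1 hF.nonempty
  refine toExposed_subset_frontier ?_
  rintro rfl
  have hPP : (0 : StrongDual ℝ (ℝ × ℝ)).toExposed P = P := by
    simp [ContinuousLinearMap.toExposed]
  have hspan : affineSpan ℝ P = ⊤ := affineSpan_eq_top_of_nonempty_interior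
    (by simpa only [hP.convex.convexHull_eq] using hP.nonempty_interior)
  have hdim := hF.2
  rw [hPP, ← direction_affineSpan, hspan, AffineSubspace.direction_top] at hdim
  simp at hdim

lemma IsEdge.exists_eq_segment (hP : IsConvexPolygon P) (hF : IsEdge P F) :
    ∃ p ∈ P.extremePoints ℝ, ∃ q ∈ P.extremePoints ℝ, p ≠ q ∧ F = segment ℝ p q ∧
      F \ P.extremePoints ℝ = openSegment ℝ p q := by
  obtain ⟨p, q, rfl⟩ := exists_eq_segment_of_collinear (hF.1.isCompact hP.isCompact)
    (hF.1.convex hP.convex) hF.nonempty (collinear_iff_finrank_le_one.2 hF.2.le)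
  have hpq : p ≠ q := by
    rintro rfl
    have hdim := hF.2
    rw [segment_same, vectorSpan_singleton, finrank_bot] at hdim
    exact zero_ne_one hdim
  have hext : segment ℝ p q ∩ P.extremePoints ℝ = {p, q} := by
    rw [← hF.1.isExtreme.extremePoints_eq, extremePoints_segment]
  refine ⟨p, ?_, q, ?_, hpq, rfl, ?_⟩
  · exact (hext.ge (mem_insert p {q})).2
  · exact (hext.ge (mem_insert_of_mem p rfl)).2
  · rw [← sdiff_self_inter, hext, segment_sdiff_endpoints hpq]

lemma IsConvexPolygon.finite_edges (hP : IsConvexPolygon P) : {F | IsEdge P F}.Finite := by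
  refine (hP.finite_extremePoints.image2 (segment ℝ) hP.finite_extremePoints).subset ?_
  intro F hF
  obtain ⟨p, hp, q, hq, -, rfl, -⟩ := IsEdge.exists_eq_segment hP hF
  exact mem_image2_of_mem hp hq

lemma IsEdge.subset_of_mem (hP : IsConvexPolygon P) (hF : IsEdge P F) (hG : IsEdge P G)
    {x : ℝ × ℝ} (hxF : x ∈ F \ P.extremePoints ℝ) (hxG : x ∈ G) : F ⊆ G := by
  obtain ⟨p, hp, q, hq, -, rfl, hopen⟩ := hF.exists_eq_segment hP
  rw [hopen] at hxF
  exact segment_subset_of_mem_openSegment hG.1.isExtreme (hG.1.convex hP.convex)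
    hp.1 hq.1 hxF hxG

lemma IsConvexPolygon.pairwiseDisjoint_edges (hP : IsConvexPolygon P) :
    {F | IsEdge P F}.PairwiseDisjoint (· \ P.extremePoints ℝ) := by
  intro F hF G hG hFG
  refine disjoint_left.2 fun x hxF hxG => hFG ?_
  exact (IsEdge.subset_of_mem hP hF hG hxF hxG.1).antisymm
    (IsEdge.subset_of_mem hP hG hF hxG hxF.1)

lemma isEdge_or_mem_extremePoints {f : StrongDual ℝ (ℝ × ℝ)} (hf : f ≠ 0) {x : ℝ × ℝ}
    (hx : x ∈ f.toExposed P) : IsEdge P (f.toExposed P) ∨ x ∈ P.extremePoints ℝ := by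
  have hker : Module.finrank ℝ (LinearMap.ker (f : ℝ × ℝ →ₗ[ℝ] ℝ)) + 1 = 2 := by
    rw [Module.Dual.finrank_ker_add_one_of_ne_zero (by exact_mod_cast hf)]
    simp
  have hle := Submodule.finrank_mono (vectorSpan_toExposed_le_ker f P)
  have hexp : IsExposed ℝ P (f.toExposed P) := ContinuousLinearMap.toExposed.isExposed
  rcases Nat.eq_zero_or_pos (Module.finrank ℝ (vectorSpan ℝ (f.toExposed P))) with hdim | hdim
  · right
    rw [Submodule.finrank_eq_zero, vectorSpan_eq_bot_iff_subsingleton] at hdim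
    rw [← isExtreme_singleton, ← hdim.eq_singleton_of_mem hx]
    exact hexp.isExtreme
  · exact .inl ⟨hexp, by omega⟩

lemma IsConvexPolygon.frontier_subset (hP : IsConvexPolygon P) :
    frontier P ⊆ P.extremePoints ℝ ∪ ⋃ F ∈ {F | IsEdge P F}, F \ P.extremePoints ℝ := by
  intro x hx
  by_cases hext : x ∈ P.extremePoints ℝ
  · exact .inl hext
  obtain ⟨f, hf, hxf⟩ := exists_mem_toExposed_of_mem_frontier hP.convex hP.isCompact.isClosed
    hP.nonempty_interior hx
  have hedge : f.toExposed P ∈ {F | IsEdge P F} :=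
    (isEdge_or_mem_extremePoints hf hxf).resolve_right hext
  exact .inr (mem_biUnion hedge ⟨hxf, hext⟩)

end Edges

section BoundaryCount

variable {P F : Set (ℝ × ℝ)} {L : AddSubgroup (ℝ × ℝ)} {D : ℕ}

lemma IsConvexPolygon.isBounded_frontier (hP : IsConvexPolygon P) :
    Bornology.IsBounded (frontier P) :=
  hP.isCompact.isBounded.subset hP.isCompact.isClosed.frontier_subset

variable [DiscreteTopology L]

lemma IsEdge.finite_smul_sdiff_inter (hP : IsConvexPolygon P) (hF : IsEdge P F) (c : ℝ) :
    (c • (F \ P.extremePoints ℝ) ∩ L).Finite :=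
  finite_smul_inter_of_isBounded L
    (hP.isCompact.isBounded.subset (sdiff_subset.trans hF.1.subset)) c

lemma IsConvexPolygon.ncard_smul_frontier_le (hP : IsConvexPolygon P) (c : ℝ) :
    (c • frontier P ∩ L).ncard ≤ (P.extremePoints ℝ).ncard +
      ∑ F ∈ hP.finite_edges.toFinset, (c • (F \ P.extremePoints ℝ) ∩ L).ncard := by
  set V := P.extremePoints ℝ
  have hcover : c • frontier P ∩ L ⊆
      c • V ∪ ⋃ F ∈ hP.finite_edges.toFinset, c • (F \ V) ∩ L := by
    rintro _ ⟨⟨x, hx, rfl⟩, hxL⟩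
    rcases hP.frontier_subset hx with hxV | hxF
    · exact .inl (smul_mem_smul_set hxV)
    · obtain ⟨F, hF, hxF⟩ := mem_iUnion₂.1 hxF
      exact .inr (mem_biUnion (hP.finite_edges.mem_toFinset.2 hF) ⟨smul_mem_smul_set hxF, hxL⟩)
  have hfin : (⋃ F ∈ hP.finite_edges.toFinset, c • (F \ V) ∩ L).Finite :=
    hP.finite_edges.toFinset.finite_toSet.biUnion fun F hF =>
      IsEdge.finite_smul_sdiff_inter hP (hP.finite_edges.mem_toFinset.1 hF) c
  calc (c • frontier P ∩ L).ncard
      ≤ (c • V ∪ ⋃ F ∈ hP.finite_edges.toFinset, c • (F \ V) ∩ L).ncard :=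
        ncard_le_ncard hcover ((hP.finite_extremePoints.smul_set).union hfin)
    _ ≤ (c • V).ncard + (⋃ F ∈ hP.finite_edges.toFinset, c • (F \ V) ∩ L).ncard :=
        ncard_union_le _ _
    _ ≤ _ := add_le_add (ncard_image_le hP.finite_extremePoints)
        (Finset.set_ncard_biUnion_le _ _)

lemma IsConvexPolygon.sum_ncard_smul_edges_le (hP : IsConvexPolygon P) {c : ℝ} (hc : c ≠ 0) :
    ∑ F ∈ hP.finite_edges.toFinset, (c • (F \ P.extremePoints ℝ) ∩ L).ncard ≤
      (c • frontier P ∩ L).ncard := by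
  set V := P.extremePoints ℝ
  have hdisj : {F | IsEdge P F}.PairwiseDisjoint (fun F => c • (F \ V) ∩ (L : Set (ℝ × ℝ))) :=
    fun F hF G hG hFG => Disjoint.mono inter_subset_left inter_subset_left
      (disjoint_image_of_injective (smul_right_injective _ hc)
        (hP.pairwiseDisjoint_edges hF hG hFG))
  rw [← finsum_mem_eq_finite_toFinset_sum, ← hP.finite_edges.ncard_biUnion
    (fun F hF => IsEdge.finite_smul_sdiff_inter hP hF c) hdisj]
  refine ncard_le_ncard (iUnion₂_subset fun F hF => ?_)
    (finite_smul_inter_of_isBounded L hP.isBounded_frontier c)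
  exact inter_subset_inter_left _
    (smul_set_mono (sdiff_subset.trans (IsEdge.subset_frontier hP hF)))

lemma IsEdge.ncard_smul_add_le_of_forall_notMem (hP : IsConvexPolygon P)
    (hF : IsEdge P F) (hD : 0 < D) (hvert : ∀ v ∈ P.extremePoints ℝ, D • v ∈ L)
    (hline : ∀ z ∈ affineSpan ℝ F, z ∉ L) (k : ℕ) :
    ((D * k + 1 : ℝ) • (F \ P.extremePoints ℝ) ∩ L).ncard + (k + 1) ≤
      ((D * (k + 2) : ℝ) • (F \ P.extremePoints ℝ) ∩ L).ncard := by
  have hfin := hF.finite_smul_sdiff_inter (L := L) hP (D * (k + 2))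
  obtain ⟨p, hp, q, hq, hpq, rfl, hopen⟩ := hF.exists_eq_segment hP
  rw [affineSpan_segment] at hline
  have hscale : (D * (k + 2) : ℝ) = D * ((k + 1 : ℕ) + 1) := by
    push_cast
    ring
  rw [hopen, hscale] at hfin ⊢
  rw [smul_openSegment_inter_eq_empty (hvert p hp) hline, ncard_empty, zero_add]
  exact le_ncard_smul_openSegment hD (hvert p hp) (hvert q hq) hpq (k + 1) hfin

lemma IsEdge.ncard_smul_le (hP : IsConvexPolygon P) (hF : IsEdge P F) (hD : 0 < D)
    (hvert : ∀ v ∈ P.extremePoints ℝ, D • v ∈ L) (k : ℕ) :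
    ((D * k + 1 : ℝ) • (F \ P.extremePoints ℝ) ∩ L).ncard ≤
      ((D * (k + 2) : ℝ) • (F \ P.extremePoints ℝ) ∩ L).ncard := by
  by_cases hline : ∀ z ∈ affineSpan ℝ F, z ∉ L
  · exact (Nat.le_add_right _ _).trans (hF.ncard_smul_add_le_of_forall_notMem hP hD hvert hline k)
  have hfin := hF.finite_smul_sdiff_inter (L := L) hP (D * (k + 2))
  push Not at hline
  obtain ⟨z, hz, hzL⟩ := hline
  obtain ⟨p, hp, q, hq, -, rfl, hopen⟩ := hF.exists_eq_segment hP
  rw [affineSpan_segment] at hz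
  have hscale : (D * (k + 2) : ℝ) = D * k + 1 + (2 * D - 1) := by ring
  rw [hopen, hscale] at hfin ⊢
  exact ncard_smul_openSegment_le_of_mem_affineSpan hD (hvert p hp) (hvert q hq) hz hzL
    (by positivity) hfin

lemma IsConvexPolygon.ncard_smul_frontier_add_le (hP : IsConvexPolygon P) (hF : IsEdge P F)
    (hD : 0 < D) (hvert : ∀ v ∈ P.extremePoints ℝ, D • v ∈ L)
    (hline : ∀ z ∈ affineSpan ℝ F, z ∉ L) (k : ℕ) :
    ((D * k + 1 : ℝ) • frontier P ∩ L).ncard + (k + 1) ≤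
      (P.extremePoints ℝ).ncard + ((D * (k + 2) : ℝ) • frontier P ∩ L).ncard := by
  set N : ℝ → Set (ℝ × ℝ) → ℕ := fun c G => (c • (G \ P.extremePoints ℝ) ∩ L).ncard
  set edges := hP.finite_edges.toFinset
  have hF' : F ∈ edges := hP.finite_edges.mem_toFinset.2 hF
  have hrest : ∑ G ∈ edges.erase F, N (D * k + 1) G ≤ ∑ G ∈ edges.erase F, N (D * (k + 2)) G :=
    Finset.sum_le_sum fun G hG => IsEdge.ncard_smul_le hP
      (hP.finite_edges.mem_toFinset.1 (Finset.mem_of_mem_erase hG)) hD hvert k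
  have hstrict : N (D * k + 1) F + (k + 1) ≤ N (D * (k + 2)) F :=
    hF.ncard_smul_add_le_of_forall_notMem hP hD hvert hline k
  have hupper : ((D * k + 1 : ℝ) • frontier P ∩ L).ncard ≤
      (P.extremePoints ℝ).ncard + ∑ G ∈ edges, N (D * k + 1) G := hP.ncard_smul_frontier_le _
  have hlower : ∑ G ∈ edges, N (D * (k + 2)) G ≤ ((D * (k + 2) : ℝ) • frontier P ∩ L).ncard :=
    hP.sum_ncard_smul_edges_le (by positivity)
  rw [← Finset.add_sum_erase _ _ hF'] at hupper hlower
  omega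

end BoundaryCount

/-- The lattice `ℤ²` as a subgroup of the plane (`latticePts` is its underlying set), written as
a `ℤ`-span so that its discreteness is an instance. -/
def integerLattice : AddSubgroup (ℝ × ℝ) :=
  (Submodule.span ℤ (range (Module.Basis.finTwoProd ℝ))).toAddSubgroup

instance : DiscreteTopology integerLattice :=
  inferInstanceAs (DiscreteTopology (Submodule.span ℤ (range (Module.Basis.finTwoProd ℝ))))

lemma coe_integerLattice : (integerLattice : Set (ℝ × ℝ)) = latticePts := by
  ext p
  simp only [integerLattice, Submodule.coe_toAddSubgroup, SetLike.mem_coe,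
    Module.Basis.mem_span_iff_repr_mem, Fin.forall_fin_two, latticePts]
  constructor
  · rintro ⟨⟨m, hm⟩, n, hn⟩
    exact ⟨m, n, Prod.ext (by simpa using hm.symm) (by simpa using hn.symm)⟩
  · rintro ⟨m, n, rfl⟩
    exact ⟨⟨m, by simp⟩, n, by simp⟩

lemma exists_pos_nsmul_qpt_mem_latticePts (V : Finset (ℚ × ℚ)) :
    ∃ D : ℕ, 0 < D ∧ ∀ v ∈ V, D • qpt v ∈ latticePts := by
  refine ⟨∏ v ∈ V, v.1.den * v.2.den, Finset.prod_pos fun v _ => by positivity, fun v hv => ?_⟩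
  obtain ⟨e, he⟩ := Finset.dvd_prod_of_mem (fun v : ℚ × ℚ => v.1.den * v.2.den) hv
  have hfst : (v.1 : ℝ) * v.1.den = v.1.num := by exact_mod_cast Rat.mul_den_eq_num v.1
  have hsnd : (v.2 : ℝ) * v.2.den = v.2.num := by exact_mod_cast Rat.mul_den_eq_num v.2
  refine ⟨v.1.num * v.2.den * e, v.2.num * v.1.den * e, ?_⟩
  rw [he, ← Nat.cast_smul_eq_nsmul ℝ]
  push_cast
  rw [← hfst, ← hsnd]
  ext <;> simp only [qpt, Prod.smul_mk, smul_eq_mul] <;> ring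

lemma isConvexPolygon_convexHull {V : Set (ℝ × ℝ)} (hV : V.Finite)
    (hint : (interior (convexHull ℝ V)).Nonempty) : IsConvexPolygon (convexHull ℝ V) where
  convex := convex_convexHull ℝ V
  isCompact := hV.isCompact_convexHull ℝ
  nonempty_interior := hint
  finite_extremePoints := hV.subset extremePoints_convexHull_subset

lemma IsRatPolygon.isConvexPolygon {P : Set (ℝ × ℝ)} (hP : IsRatPolygon P) :
    IsConvexPolygon P := by
  obtain ⟨V, rfl, hint⟩ := hP
  exact isConvexPolygon_convexHull (V.finite_toSet.image qpt) hint

lemma IsRatPolygon.exists_pos_nsmul_mem {P : Set (ℝ × ℝ)} (hP : IsRatPolygon P) :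
    ∃ D : ℕ, 0 < D ∧ ∀ v ∈ P.extremePoints ℝ, D • v ∈ integerLattice := by
  obtain ⟨V, rfl, -⟩ := hP
  obtain ⟨D, hD, hDV⟩ := exists_pos_nsmul_qpt_mem_latticePts V
  refine ⟨D, hD, fun v hv => ?_⟩
  obtain ⟨u, hu, rfl⟩ := extremePoints_convexHull_subset hv
  rw [← SetLike.mem_coe, coe_integerLattice]
  exact hDV u hu

theorem stmt_13_general (P : Set (ℝ × ℝ)) (hP : IsConvexPolygon P)
    (L : AddSubgroup (ℝ × ℝ)) [DiscreteTopology L] (D : ℕ) (hD : 0 < D)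
    (hvert : ∀ v ∈ P.extremePoints ℝ, D • v ∈ L)
    (hb : ∀ t : ℕ, 0 < t →
      (frontier ((t : ℝ) • P) ∩ L).ncard = t * (frontier P ∩ L).ncard)
    (F : Set (ℝ × ℝ)) (hF : IsEdge P F) :
    ∃ p ∈ affineSpan ℝ F, p ∈ L := by
  by_contra! hline
  have hcount : ∀ t : ℕ, 0 < t →
      ((t : ℝ) • frontier P ∩ L).ncard = t * (frontier P ∩ L).ncard := fun t ht => by
    rw [← hb t ht, frontier_smul (by exact_mod_cast ht.ne')]
  set b := (frontier P ∩ L).ncard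
  set k := 2 * D * b + (P.extremePoints ℝ).ncard
  have hgap := hP.ncard_smul_frontier_add_le hF hD hvert hline k
  have hsmall := hcount (D * k + 1) (by positivity)
  have hlarge := hcount (D * (k + 2)) (by positivity)
  push_cast at hsmall hlarge
  rw [hsmall, hlarge] at hgap
  have hscale : D * (k + 2) * b + b = (D * k + 1) * b + 2 * D * b := by ring
  omega

/-- if `P` is a rational convex polygon with
`#(∂(tP) ∩ ℤ²) = t · #(∂P ∩ ℤ²)` for all positive integers `t`, then every edge
of `P` is reticular, i.e. its affine span contains a lattice point. -/
theorem stmt_13 (P : Set (ℝ × ℝ)) (hP : IsRatPolygon P)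
    (hb : ∀ t : ℕ, 0 < t →
      (frontier ((t : ℝ) • P) ∩ latticePts).ncard =
        t * (frontier P ∩ latticePts).ncard) :
    ∀ E : Set (ℝ × ℝ), IsEdge P E →
      ∃ p : ℝ × ℝ, p ∈ affineSpan ℝ E ∧ p ∈ latticePts := by
  obtain ⟨D, hD, hvert⟩ := hP.exists_pos_nsmul_mem
  simp only [← coe_integerLattice] at hb ⊢
  exact stmt_13_general P hP.isConvexPolygon integerLattice D hD hvert hb
end

section
/- Let P ⊂ ℝ² be a rational convex polygon that is pseudointegral and has 0 in its interior. Then the following are equivalent: (i) the only lattice point in the interior of P is the origin; (ii) for every edge E of P there is a primitive vector u ∈ ℤ² with E ⊆ {a ∈ ℝ² : ⟨u,a⟩ = 1} and ⟨u,p⟩ ≤ 1 for all p ∈ P; (iii) the dual polygon P° := {u ∈ ℝ² : ⟨u,a⟩ ≤ 1 for all a ∈ P} is the convex hull of a finite subset of ℤ². -/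
open Set Pointwise

/-- The standard inner product on ℝ². -/
def dotR (u a : ℝ × ℝ) : ℝ := u.1 * a.1 + u.2 * a.2

/-- The coercion of an integer point of the plane to a real point. -/
def zpt (v : ℤ × ℤ) : ℝ × ℝ := ((v.1 : ℝ), (v.2 : ℝ))

/-!
The polar dual `P°` is the convex hull of its finitely many extreme points, which are rational, so
for a common denominator `D` the vectors `n = D • w`, `w` an extreme point, are integral. Let `F T`
be the number of lattice points `x` with `⟨n, x⟩ ≤ T` for all these `n`; then `F (D * t)` is the
Ehrhart function of `P`.

Write `n = d • u` with `u` primitive. The boundary layer `F j - F (j - 1)` is a sum, over the `n`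
with `d ∣ j`, of counts `⌈β * j⌉ - ⌈α * j⌉` of integers in a half-open interval. Cutting the
boundary into facets with the other end point included replaces `⌈·⌉` by `⌊·⌋`; comparing both cuts
shows that the extension of `F` by `F (-1 - T) = F T` (Ehrhart reciprocity) satisfies the same layer
formula for all integers. Hence `F` is a quasi-polynomial on `ℤ`, and if `P` is pseudointegral, then
`F (D * t) = c(t)` for all integers `t`, with `c` quadratic.

If `0` is the only interior lattice point, then `F (D - 1) = F 0`, that is, `c(-1) = c(0)`. Thus
`c(-t) = c(t - 1)`, which says `F (D * t - 1) = F (D * (t - 1))`: all levels not divisible by `D`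
are empty, which forces `D ∣ d`. As the layers at the multiples of `D` now grow linearly, `d ∣ D`.
So `d = D` and every extreme point `w = u` of `P°` is a primitive lattice vector.
-/

section SecondDifference

open Polynomial

variable {𝕜 : Type*} [Field 𝕜] [CharZero 𝕜] {G : ℤ → 𝕜} {K : ℤ} {κ : 𝕜} {c : 𝕜[X]}

lemma apply_add_mul_of_secondDiff_eq (hG : ∀ t, G (t + 2 * K) - 2 * G (t + K) + G t = κ)
    (t : ℤ) (k : ℕ) :
    G (t + K * k) = G t + (G (t + K) - G t) * k + κ / 2 * (k * (k - 1)) := by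
  suffices G (t + K * k) = G t + (G (t + K) - G t) * k + κ / 2 * (k * (k - 1)) ∧
      G (t + K * (k + 1)) = G t + (G (t + K) - G t) * (k + 1) + κ / 2 * ((k + 1) * k) from this.1
  induction k with
  | zero => simp
  | succ k ih =>
    have hk := hG (t + K * k)
    rw [show t + K * k + 2 * K = t + K * (k + 1 + 1) by ring,
      show t + K * k + K = t + K * (k + 1) by ring] at hk
    push_cast
    exact ⟨by linear_combination ih.2, by linear_combination hk + 2 * ih.2 - ih.1⟩

lemma comp_eq_of_secondDiff_eq (hK : 0 < K)
    (hG : ∀ t, G (t + 2 * K) - 2 * G (t + K) + G t = κ)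
    (hc : ∀ t : ℕ, 0 < t → G t = c.eval (t : 𝕜)) (t : ℤ) :
    c.comp (C (K : 𝕜) * X + C (t : 𝕜)) =
      C (κ / 2) * X ^ 2 + C (G (t + K) - G t - κ / 2) * X + C (G t) := by
  refine eq_of_infinite_eval_eq _ _ <| ((Ici_infinite (t.natAbs + 1)).image
    (Nat.cast_injective (R := 𝕜)).injOn).mono ?_
  rintro _ ⟨k, hk, rfl⟩
  have hpos : 0 < t + K * k := by
    have hk' : -t < k := by rw [mem_Ici] at hk; omega
    nlinarith
  obtain ⟨m, hm⟩ := Int.eq_ofNat_of_zero_le hpos.le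
  have hm_pos : 0 < m := by omega
  have hGk := apply_add_mul_of_secondDiff_eq hG t k
  have hmk : (K : 𝕜) * k + t = m := by rw [add_comm]; exact_mod_cast congrArg (Int.cast : ℤ → 𝕜) hm
  rw [hm, hc m hm_pos] at hGk
  simp only [mem_ofPred_eq, eval_comp, eval_add, eval_mul, eval_C, eval_X, eval_pow, hmk, hGk]
  ring

lemma apply_eq_eval_of_secondDiff_eq (hK : 0 < K)
    (hG : ∀ t, G (t + 2 * K) - 2 * G (t + K) + G t = κ)
    (hc : ∀ t : ℕ, 0 < t → G t = c.eval (t : 𝕜)) (t : ℤ) : G t = c.eval (t : 𝕜) := by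
  simpa [eval_comp] using (congrArg (eval 0) (comp_eq_of_secondDiff_eq hK hG hc t)).symm

lemma natDegree_le_two_of_secondDiff_eq (hK : 0 < K)
    (hG : ∀ t, G (t + 2 * K) - 2 * G (t + K) + G t = κ)
    (hc : ∀ t : ℕ, 0 < t → G t = c.eval (t : 𝕜)) : c.natDegree ≤ 2 := by
  have hcomp := congrArg natDegree (comp_eq_of_secondDiff_eq hK hG hc 0)
  rw [natDegree_comp, natDegree_linear (Int.cast_ne_zero.2 hK.ne'), mul_one] at hcomp
  exact hcomp.trans_le natDegree_quadratic_le

end SecondDifference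

section CeilSum

open Polynomial

variable {ι : Type*} {W : Finset ι} {d : ι → ℤ} {α β : ι → ℚ} {N : ℤ} {F : ℤ → ℤ} {D : ℤ}

/-- The number of lattice points on the `j`-th boundary layer of a polygon whose edges are indexed
by `W`: the layer of the edge `n` carries lattice points only if `d n ∣ j`, and these correspond to
the integers in the half-open interval `[α n * j, β n * j)`. -/
def ceilSum (W : Finset ι) (d : ι → ℤ) (α β : ι → ℚ) (j : ℤ) : ℤ :=
  ∑ n ∈ W, if d n ∣ j then ⌈β n * j⌉ - ⌈α n * j⌉ else 0

/-- The rate of linear growth of `ceilSum W d α β` along a suitable arithmetic progression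
containing `j`. -/
def ceilSlope (W : Finset ι) (d : ι → ℤ) (α β : ι → ℚ) (j : ℤ) : ℚ :=
  ∑ n ∈ W with d n ∣ j, (β n - α n)

/-- `N` is a common difference of arithmetic progressions on which `ceilSum W d α β` is affine. -/
def IsCeilPeriod (W : Finset ι) (d : ι → ℤ) (α β : ι → ℚ) (N : ℤ) : Prop :=
  ∀ n ∈ W, d n ∣ N ∧ ((α n).den : ℤ) ∣ N ∧ ((β n).den : ℤ) ∣ N

lemma exists_isCeilPeriod (hd : ∀ n ∈ W, 0 < d n) : ∃ N, 0 < N ∧ IsCeilPeriod W d α β N := by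
  refine ⟨∏ n ∈ W, d n * (α n).den * (β n).den, Finset.prod_pos fun n hn ↦ ?_, fun n hn ↦ ?_⟩
  · have := hd n hn
    positivity
  · have hn' := Finset.dvd_prod_of_mem (fun n ↦ d n * (α n).den * (β n).den) hn
    exact ⟨(Dvd.intro _ (mul_assoc _ _ _).symm).trans hn',
      ((Dvd.intro_left _ rfl).mul_right _).trans hn', (Dvd.intro_left _ rfl).trans hn'⟩

lemma IsCeilPeriod.mul_left (hN : IsCeilPeriod W d α β N) (k : ℤ) :
    IsCeilPeriod W d α β (k * N) := fun n hn ↦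
  ⟨(hN n hn).1.mul_left k, (hN n hn).2.1.mul_left k, (hN n hn).2.2.mul_left k⟩

lemma ceil_mul_add_of_den_dvd {q : ℚ} (hq : (q.den : ℤ) ∣ N) (j : ℤ) :
    (⌈q * (j + N : ℤ)⌉ : ℚ) = ⌈q * j⌉ + q * N := by
  obtain ⟨m, rfl⟩ := hq
  have hq' : q * ((q.den * m : ℤ) : ℚ) = (q.num * m : ℤ) := by
    push_cast
    rw [← mul_assoc, Rat.mul_den_eq_num]
  rw [hq', Int.cast_add, mul_add, hq', Int.ceil_add_intCast, Int.cast_add]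

lemma IsCeilPeriod.ceilSlope_add (hN : IsCeilPeriod W d α β N) (j : ℤ) :
    ceilSlope W d α β (j + N) = ceilSlope W d α β j := by
  rw [ceilSlope, ceilSlope,
    Finset.filter_congr fun n hn ↦ (dvd_add_left (hN n hn).1 : d n ∣ j + N ↔ d n ∣ j)]

lemma IsCeilPeriod.ceilSum_add (hN : IsCeilPeriod W d α β N) (j : ℤ) :
    (ceilSum W d α β (j + N) : ℚ) = ceilSum W d α β j + N * ceilSlope W d α β j := by
  rw [ceilSum, ceilSum, ceilSlope, Finset.sum_filter, Finset.mul_sum, Int.cast_sum, Int.cast_sum,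
    ← Finset.sum_add_distrib]
  refine Finset.sum_congr rfl fun n hn ↦ ?_
  obtain ⟨hd, hα, hβ⟩ := hN n hn
  by_cases hj : d n ∣ j
  · rw [if_pos ((dvd_add_left hd).2 hj), if_pos hj, if_pos hj, Int.cast_sub, Int.cast_sub,
      ceil_mul_add_of_den_dvd hα, ceil_mul_add_of_den_dvd hβ]
    ring
  · rw [if_neg (mt (dvd_add_left hd).1 hj), if_neg hj, if_neg hj]
    simp

lemma IsCeilPeriod.secondDiff_eq (hN : IsCeilPeriod W d α β N)
    (hstep : ∀ T, F T = F (T - 1) + ceilSum W d α β T) (T : ℤ) :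
    (F (T + 2 * N) - 2 * F (T + N) + F T : ℚ) = F (2 * N) - 2 * F N + F 0 := by
  have hper : Function.Periodic (fun T ↦ (F (T + 2 * N) - 2 * F (T + N) + F T : ℚ)) 1 := by
    intro T
    have h2 := hN.ceilSum_add (T + 1 + N)
    have h1 := hN.ceilSum_add (T + 1)
    rw [hN.ceilSlope_add, show T + 1 + N + N = T + 1 + 2 * N by ring] at h2
    have s2 := hstep (T + 1 + 2 * N)
    have s1 := hstep (T + 1 + N)
    have s0 := hstep (T + 1)
    rw [show T + 1 + 2 * N - 1 = T + 2 * N by ring] at s2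
    rw [show T + 1 + N - 1 = T + N by ring] at s1
    rw [show T + 1 - 1 = T by ring] at s0
    simp only [s2, s1, s0]
    push_cast
    linear_combination h2 - h1
  simpa using hper.int_mul_eq T

lemma exists_apply_mul_eq {c : ℚ[X]} (hd : ∀ n ∈ W, 0 < d n)
    (hstep : ∀ T, F T = F (T - 1) + ceilSum W d α β T) (hsymm : ∀ T, F (-1 - T) = F T)
    (hc : ∀ t : ℕ, 0 < t → (F (D * t) : ℚ) = c.eval (t : ℚ)) (hF : F (D - 1) = F 0) :
    ∃ a : ℚ, ∀ t : ℤ, (F (D * t) : ℚ) = F 0 + a * (t * (t + 1)) := by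
  obtain ⟨K, hK, hper⟩ := exists_isCeilPeriod (α := α) (β := β) hd
  have hsecond (t : ℤ) : (F (D * (t + 2 * K)) - 2 * F (D * (t + K)) + F (D * t) : ℚ) =
      F (2 * (D * K)) - 2 * F (D * K) + F 0 := by
    rw [← (hper.mul_left D).secondDiff_eq hstep (D * t)]
    ring_nf
  have heval := apply_eq_eval_of_secondDiff_eq (G := fun t ↦ (F (D * t) : ℚ)) hK hsecond hc
  have hdeg := natDegree_le_two_of_secondDiff_eq (G := fun t ↦ (F (D * t) : ℚ)) hK hsecond hc
  have hquad (x : ℚ) : c.eval x = c.coeff 0 + c.coeff 1 * x + c.coeff 2 * x ^ 2 := by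
    simp [eval_eq_sum_range' (Nat.lt_succ_of_le hdeg), Finset.sum_range_succ]
  have h0 : (F 0 : ℚ) = c.coeff 0 := by simpa [hquad] using heval 0
  have hneg : (F 0 : ℚ) = c.coeff 0 - c.coeff 1 + c.coeff 2 := by
    have hF' : F (D * -1) = F 0 := by rw [← hF, ← hsymm (D - 1)]; congr 1; ring
    rw [← hF', heval (-1), hquad]
    push_cast
    ring
  refine ⟨c.coeff 2, fun t ↦ ?_⟩
  rw [heval t, hquad]
  linear_combination (t : ℚ) * (hneg - h0) - h0

lemma apply_mul_sub_one_eq {a : ℚ} (hsymm : ∀ T, F (-1 - T) = F T)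
    (hquad : ∀ t : ℤ, (F (D * t) : ℚ) = F 0 + a * (t * (t + 1))) (t : ℤ) :
    F (D * t - 1) = F (D * (t - 1)) := by
  rw [← hsymm, show -1 - (D * t - 1) = D * -t by ring, ← Int.cast_inj (α := ℚ), hquad, hquad]
  push_cast
  ring

lemma ceilSum_mul_eq {a : ℚ} (hstep : ∀ T, F T = F (T - 1) + ceilSum W d α β T)
    (hsymm : ∀ T, F (-1 - T) = F T)
    (hquad : ∀ t : ℤ, (F (D * t) : ℚ) = F 0 + a * (t * (t + 1))) (t : ℤ) :
    (ceilSum W d α β (D * t) : ℚ) = 2 * a * t := by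
  have hFt := hstep (D * t)
  rw [apply_mul_sub_one_eq hsymm hquad] at hFt
  have hFt' : (F (D * t) : ℚ) = F (D * (t - 1)) + ceilSum W d α β (D * t) := mod_cast hFt
  rw [hquad, hquad] at hFt'
  push_cast at hFt'
  linear_combination -hFt'

lemma ceilSum_eq_zero_of_not_dvd {a : ℚ} (hstep : ∀ T, F T = F (T - 1) + ceilSum W d α β T)
    (hsymm : ∀ T, F (-1 - T) = F T) (hmono : MonotoneOn F (Ici 0)) (hD : 0 < D)
    (hquad : ∀ t : ℤ, (F (D * t) : ℚ) = F 0 + a * (t * (t + 1))) {j : ℤ} (hj : 0 < j)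
    (hDj : ¬ D ∣ j) : ceilSum W d α β j = 0 := by
  have hmod_pos : 0 < j % D :=
    (Int.emod_nonneg j hD.ne').lt_of_ne' (mt Int.dvd_of_emod_eq_zero hDj)
  have hmod_lt : j % D < D := Int.emod_lt_of_pos j hD
  have hdiv : D * (j / D) + j % D = j := Int.mul_ediv_add_emod j D
  have hdiv_nonneg : 0 ≤ D * (j / D) := mul_nonneg hD.le (Int.ediv_nonneg hj.le hD.le)
  have hnext : D * (j / D + 1) = D * (j / D) + D := by ring
  have hlevel : F (D * (j / D + 1) - 1) = F (D * (j / D)) := by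
    simpa using apply_mul_sub_one_eq hsymm hquad (j / D + 1)
  have hle₁ : F (D * (j / D)) ≤ F (j - 1) :=
    hmono (mem_Ici.2 hdiv_nonneg) (mem_Ici.2 (by omega)) (by omega)
  have hle₂ : F (j - 1) ≤ F j := hmono (mem_Ici.2 (by omega)) (mem_Ici.2 hj.le) (by omega)
  have hle₃ : F j ≤ F (D * (j / D + 1) - 1) :=
    hmono (mem_Ici.2 hj.le) (mem_Ici.2 (by omega)) (by omega)
  linarith [hstep j]

lemma dvd_of_ceilSum_eq_zero (hd : ∀ n ∈ W, 0 < d n) (hαβ : ∀ n ∈ W, α n < β n) (hD : 0 < D)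
    (hzero : ∀ j, 0 < j → ¬ D ∣ j → ceilSum W d α β j = 0) {n : ι} (hn : n ∈ W) : D ∣ d n := by
  by_contra hDn
  obtain ⟨N, hN, hper⟩ := exists_isCeilPeriod (α := α) (β := β) hd
  have hDN : ¬ D ∣ d n + D * N := by rwa [dvd_add_left (dvd_mul_right D N)]
  have hadd := (hper.mul_left D).ceilSum_add (d n)
  rw [hzero _ (hd n hn) hDn, hzero _ (add_pos (hd n hn) (mul_pos hD hN)) hDN, Int.cast_zero,
    zero_add, zero_eq_mul, Int.cast_eq_zero] at hadd
  have hslope_pos : 0 < ceilSlope W d α β (d n) :=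
    Finset.sum_pos (fun m hm ↦ sub_pos.2 (hαβ m (Finset.mem_filter.1 hm).1))
      ⟨n, Finset.mem_filter.2 ⟨hn, dvd_rfl⟩⟩
  exact hadd.elim (mul_pos hD hN).ne' hslope_pos.ne'

lemma dvd_of_ceilSum_mul_eq {a : ℚ} (hd : ∀ n ∈ W, 0 < d n) (hαβ : ∀ n ∈ W, α n < β n)
    (hD : 0 < D) (hlin : ∀ t : ℤ, (ceilSum W d α β (D * t) : ℚ) = 2 * a * t) {n : ι}
    (hn : n ∈ W) : d n ∣ D := by
  obtain ⟨N, hN, hper⟩ := exists_isCeilPeriod (α := α) (β := β) hd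
  have hslope (t : ℤ) : (D * N : ℚ) * ceilSlope W d α β (D * t) = 2 * a * N := by
    have hadd := (hper.mul_left D).ceilSum_add (D * t)
    rw [← mul_add, hlin, hlin] at hadd
    push_cast at hadd
    linear_combination -hadd
  have hslope_eq : ceilSlope W d α β D = ceilSlope W d α β 0 := by
    have hDN : (D * N : ℚ) ≠ 0 := by exact_mod_cast (mul_pos hD hN).ne'
    refine mul_left_cancel₀ hDN ?_
    simpa using (hslope 1).trans (hslope 0).symm
  by_contra hnD
  refine hslope_eq.not_lt (Finset.sum_lt_sum_of_subset (i := n) ?_ ?_ ?_ ?_ ?_)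
  · exact Finset.monotone_filter_right W fun m _ _ ↦ dvd_zero _
  · exact Finset.mem_filter.2 ⟨hn, dvd_zero _⟩
  · exact fun h ↦ hnD (Finset.mem_filter.1 h).2
  · exact sub_pos.2 (hαβ n hn)
  · exact fun m hm _ ↦ (sub_pos.2 (hαβ m (Finset.mem_filter.1 hm).1)).le

theorem eq_of_apply_mul_eq_eval {c : ℚ[X]} (hd : ∀ n ∈ W, 0 < d n)
    (hαβ : ∀ n ∈ W, α n < β n) (hstep : ∀ T, F T = F (T - 1) + ceilSum W d α β T)
    (hsymm : ∀ T, F (-1 - T) = F T) (hmono : MonotoneOn F (Ici 0)) (hD : 0 < D)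
    (hc : ∀ t : ℕ, 0 < t → (F (D * t) : ℚ) = c.eval (t : ℚ)) (hF : F (D - 1) = F 0) {n : ι}
    (hn : n ∈ W) : d n = D := by
  obtain ⟨a, hquad⟩ := exists_apply_mul_eq hd hstep hsymm hc hF
  refine Int.dvd_antisymm (hd n hn).le hD.le ?_ ?_
  · exact dvd_of_ceilSum_mul_eq hd hαβ hD (ceilSum_mul_eq hstep hsymm hquad) hn
  · exact dvd_of_ceilSum_eq_zero hd hαβ hD
      (fun j ↦ ceilSum_eq_zero_of_not_dvd hstep hsymm hmono hD hquad) hn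

end CeilSum

section AffineConstraints

variable {ι 𝕜 : Type*} [Field 𝕜] [LinearOrder 𝕜] [IsStrictOrderedRing 𝕜] {S : Finset ι}
  {A B : ι → 𝕜} {α β : 𝕜}

lemma exists_forall_affine_nonneg_iff_mem_Icc (hlo : ∃ i ∈ S, 0 < B i) (hhi : ∃ i ∈ S, B i < 0)
    (hne : ∃ y, ∀ i ∈ S, 0 ≤ A i + y * B i) :
    ∃ α β, (∀ y, (∀ i ∈ S, 0 ≤ A i + y * B i) ↔ y ∈ Icc α β) ∧
      (∃ i ∈ S, 0 < B i ∧ A i + α * B i = 0) ∧ ∃ i ∈ S, B i < 0 ∧ A i + β * B i = 0 := by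
  obtain ⟨y₀, hy₀⟩ := hne
  have hlower {i : ι} (hi : 0 < B i) (y : 𝕜) : 0 ≤ A i + y * B i ↔ -A i / B i ≤ y := by
    rw [div_le_iff₀ hi, neg_le_iff_add_nonneg']
  have hupper {i : ι} (hi : B i < 0) (y : 𝕜) : 0 ≤ A i + y * B i ↔ y ≤ -A i / B i := by
    rw [le_div_iff_of_neg hi, neg_le_iff_add_nonneg']
  obtain ⟨i, hi, hmax⟩ := Finset.exists_max_image {i ∈ S | 0 < B i} (fun i ↦ -A i / B i)
    (by simpa [Finset.Nonempty] using hlo)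
  obtain ⟨k, hk, hmin⟩ := Finset.exists_min_image {i ∈ S | B i < 0} (fun i ↦ -A i / B i)
    (by simpa [Finset.Nonempty] using hhi)
  simp only [Finset.mem_filter, and_imp] at hi hmax hk hmin
  refine ⟨-A i / B i, -A k / B k, fun y ↦ ⟨fun h ↦ ?_, fun hy m hm ↦ ?_⟩, ?_, ?_⟩
  · exact ⟨(hlower hi.2 y).1 (h i hi.1), (hupper hk.2 y).1 (h k hk.1)⟩
  · rcases lt_trichotomy (B m) 0 with hm' | hm' | hm'
    · exact (hupper hm' y).2 (hy.2.trans (hmin m hm hm'))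
    · simpa [hm'] using hy₀ m hm
    · exact (hlower hm' y).2 ((hmax m hm hm').trans hy.1)
  · exact ⟨i, hi.1, hi.2, by rw [div_mul_cancel₀ _ hi.2.ne', add_neg_cancel]⟩
  · exact ⟨k, hk.1, hk.2, by rw [div_mul_cancel₀ _ hk.2.ne, add_neg_cancel]⟩

lemma forall_affine_pos_or_iff_mem_Ico
    (hIcc : ∀ y, (∀ i ∈ S, 0 ≤ A i + y * B i) ↔ y ∈ Icc α β) (hαβ : α ≤ β)
    (hβ : ∃ i ∈ S, B i < 0 ∧ A i + β * B i = 0) (hAB : ∀ i ∈ S, B i = 0 → A i ≠ 0) (y : 𝕜) :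
    (∀ i ∈ S, 0 < A i + y * B i ∨ 0 = A i + y * B i ∧ 0 < B i) ↔ y ∈ Ico α β := by
  constructor
  · intro h
    obtain ⟨i, hi, hBi, hAi⟩ := hβ
    have hy : y ∈ Icc α β := (hIcc y).1 fun i hi ↦ (h i hi).elim le_of_lt fun h ↦ h.1.le
    refine ⟨hy.1, lt_of_not_ge fun hβy ↦ ?_⟩
    have hyβ : y = β := hy.2.antisymm hβy
    rcases h i hi with h | h
    · exact h.ne (by rw [hyβ, hAi])
    · exact h.2.not_gt hBi
  · intro hy i hi
    have hyi := (hIcc y).2 ⟨hy.1, hy.2.le⟩ i hi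
    have hβi := (hIcc β).2 (right_mem_Icc.2 hαβ) i hi
    refine hyi.lt_or_eq.imp_right fun h ↦ ⟨h, lt_of_le_of_ne ?_ fun hBi ↦ ?_⟩
    · refine nonneg_of_mul_nonneg_right (a := β - y) ?_ (sub_pos.2 hy.2)
      linear_combination hβi - h
    · exact hAB i hi hBi.symm (by simpa [← hBi] using h.symm)

lemma forall_affine_pos_or_iff_mem_Ioc
    (hIcc : ∀ y, (∀ i ∈ S, 0 ≤ A i + y * B i) ↔ y ∈ Icc α β) (hαβ : α ≤ β)
    (hα : ∃ i ∈ S, 0 < B i ∧ A i + α * B i = 0) (hAB : ∀ i ∈ S, B i = 0 → A i ≠ 0) (y : 𝕜) :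
    (∀ i ∈ S, 0 < A i + y * B i ∨ 0 = A i + y * B i ∧ B i < 0) ↔ y ∈ Ioc α β := by
  have hreflect := forall_affine_pos_or_iff_mem_Ico (A := A) (B := -B) (S := S) (α := -β) (β := -α)
    (fun y ↦ by simpa [and_comm, neg_le, le_neg] using hIcc (-y)) (neg_le_neg hαβ)
    (by simpa using hα) (by simpa using hAB) (-y)
  simpa [and_comm] using hreflect

end AffineConstraints

section LatticePolygon

variable {W : Finset (ℤ × ℤ)} {n u g x : ℤ × ℤ} {ε d s j : ℤ}

/-- The standard inner product on `ℤ²`. -/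
def dotZ (n x : ℤ × ℤ) : ℤ := n.1 * x.1 + n.2 * x.2

/-- Rotation of `ℤ²` by a right angle. -/
def rot (x : ℤ × ℤ) : ℤ × ℤ := (-x.2, x.1)

lemma dotZ_sub_left (n m x : ℤ × ℤ) : dotZ (n - m) x = dotZ n x - dotZ m x := by
  simp only [dotZ, Prod.fst_sub, Prod.snd_sub]
  ring

lemma dotZ_smul_left (d : ℤ) (n x : ℤ × ℤ) : dotZ (d • n) x = d * dotZ n x := by
  simp only [dotZ, Prod.smul_fst, Prod.smul_snd, smul_eq_mul]
  ring

lemma dotZ_add_right (n x y : ℤ × ℤ) : dotZ n (x + y) = dotZ n x + dotZ n y := by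
  simp only [dotZ, Prod.fst_add, Prod.snd_add]
  ring

lemma dotZ_smul_right (n : ℤ × ℤ) (s : ℤ) (x : ℤ × ℤ) : dotZ n (s • x) = s * dotZ n x := by
  simp only [dotZ, Prod.smul_fst, Prod.smul_snd, smul_eq_mul]
  ring

lemma dotZ_zero_right (n : ℤ × ℤ) : dotZ n 0 = 0 := by simp [dotZ]

lemma dotZ_rot_self (u : ℤ × ℤ) : dotZ u (rot u) = 0 := by
  simp only [dotZ, rot]
  ring

lemma dotZ_self_pos (hx : x ≠ 0) : 0 < dotZ x x := by
  have hx' : x.1 ≠ 0 ∨ x.2 ≠ 0 := by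
    contrapose! hx
    exact Prod.ext hx.1 hx.2
  unfold dotZ
  rcases hx' with h | h
  · exact add_pos_of_pos_of_nonneg (mul_self_pos.2 h) (mul_self_nonneg _)
  · exact add_pos_of_nonneg_of_pos (mul_self_nonneg _) (mul_self_pos.2 h)

lemma eq_smul_add_smul_rot (hug : dotZ u g = 1) (x : ℤ × ℤ) :
    x = dotZ u x • g + dotZ (rot g) x • rot u := by
  ext <;> simp only [dotZ, rot, Prod.fst_add, Prod.snd_add, Prod.smul_fst, Prod.smul_snd,
    smul_eq_mul] at hug ⊢
  · linear_combination -x.1 * hug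
  · linear_combination -x.2 * hug

lemma eq_zero_of_dotZ_eq_zero (hx : x ≠ 0) (h : dotZ n x = 0) (hrot : dotZ n (rot x) = 0) :
    n = 0 := by
  have hx' := (dotZ_self_pos hx).ne'
  simp only [dotZ, rot] at h hrot hx'
  ext
  · exact (mul_eq_zero_iff_right hx').1 (by linear_combination x.1 * h - x.2 * hrot)
  · exact (mul_eq_zero_iff_right hx').1 (by linear_combination x.2 * h + x.1 * hrot)

lemma exists_eq_smul_isCoprime (hn : n ≠ 0) :
    ∃ (d : ℤ) (u : ℤ × ℤ), 0 < d ∧ IsCoprime u.1 u.2 ∧ n = d • u := by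
  have hgcd : Int.gcd n.1 n.2 ≠ 0 := fun h ↦
    hn (Prod.ext (Int.gcd_eq_zero_iff.1 h).1 (Int.gcd_eq_zero_iff.1 h).2)
  refine ⟨Int.gcd n.1 n.2, (n.1 / Int.gcd n.1 n.2, n.2 / Int.gcd n.1 n.2), by omega, ?_, ?_⟩
  · exact Int.isCoprime_iff_gcd_eq_one.2 (Int.gcd_ediv_gcd_ediv_gcd (by omega))
  · exact Prod.ext (Int.mul_ediv_cancel' (Int.gcd_dvd_left ..)).symm
      (Int.mul_ediv_cancel' (Int.gcd_dvd_right ..)).symm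

/-- The pairing of `n` with the infinitesimal rotation `x + ε • rot x` of `x`, encoded
lexicographically. Perturbing `x` in this way breaks the ties between facet normals. -/
def tilted (ε : ℤ) (n x : ℤ × ℤ) : ℤ ×ₗ ℤ := toLex (dotZ n x, ε * dotZ n (rot x))

lemma tilted_lt_tilted_iff {m : ℤ × ℤ} :
    tilted ε m x < tilted ε n x ↔
      0 < dotZ (n - m) x ∨ 0 = dotZ (n - m) x ∧ 0 < ε * dotZ (n - m) (rot x) := by
  simp only [tilted, Prod.Lex.toLex_lt_toLex, dotZ_sub_left, mul_sub, sub_pos,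
    eq_comm (a := (0 : ℤ)), sub_eq_zero, eq_comm (a := dotZ m x)]

lemma tilted_injective (hε : ε ≠ 0) (hx : x ≠ 0) : Function.Injective fun n ↦ tilted ε n x := by
  intro n m h
  obtain ⟨h₁, h₂⟩ := Prod.ext_iff.1 (toLex_inj.1 h)
  refine sub_eq_zero.1 (eq_zero_of_dotZ_eq_zero hx ?_ ?_)
  · rw [dotZ_sub_left, sub_eq_zero]
    exact h₁
  · rw [dotZ_sub_left, sub_eq_zero]
    exact mul_left_cancel₀ hε h₂

/-- The lattice points of the `T`-th dilate of the polygon with normals `W`. -/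
def sublevel (W : Finset (ℤ × ℤ)) (T : ℤ) : Set (ℤ × ℤ) := {x | ∀ n ∈ W, dotZ n x ≤ T}

/-- The lattice points at level `j` over the half-open facet with normal `n`; the sign of `ε`
decides which of the two end points of the facet is included. -/
def coneSlice (W : Finset (ℤ × ℤ)) (ε : ℤ) (n : ℤ × ℤ) (j : ℤ) : Set (ℤ × ℤ) :=
  {x | dotZ n x = j ∧ ∀ m ∈ W, m ≠ n → tilted ε m x < tilted ε n x}

lemma coneSlice_subset_sublevel (W : Finset (ℤ × ℤ)) (ε : ℤ) (n : ℤ × ℤ) (j : ℤ) :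
    coneSlice W ε n j ⊆ sublevel W j := by
  rintro x ⟨rfl, hmax⟩ m hm
  rcases eq_or_ne m n with rfl | hne
  · exact le_rfl
  · exact ((Prod.Lex.toLex_lt_toLex.1 (hmax m hm hne)).elim le_of_lt fun h ↦ h.1.le)

lemma pairwiseDisjoint_coneSlice (W : Finset (ℤ × ℤ)) (ε j : ℤ) :
    (W : Set (ℤ × ℤ)).PairwiseDisjoint fun n ↦ coneSlice W ε n j := by
  intro n hn m hm hne
  refine Set.disjoint_left.2 fun x hxn hxm ↦ ?_
  exact lt_asymm (hxn.2 m hm hne.symm) (hxm.2 n hn hne)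

lemma sublevel_sdiff_sublevel_sub_one (hε : ε ≠ 0) (hj : 0 < j) :
    sublevel W j \ sublevel W (j - 1) = ⋃ n ∈ W, coneSlice W ε n j := by
  ext x
  simp only [mem_sdiff, mem_iUnion₂, exists_prop]
  constructor
  · rintro ⟨hle, hnot⟩
    obtain ⟨m, hm, hmj⟩ : ∃ m ∈ W, j - 1 < dotZ m x := by simpa [sublevel] using hnot
    have hx : x ≠ 0 := by
      rintro rfl
      rw [dotZ_zero_right] at hmj
      omega
    obtain ⟨n, hn, hmax⟩ := W.exists_max_image (fun n ↦ tilted ε n x) ⟨m, hm⟩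
    have hmn : dotZ m x ≤ dotZ n x :=
      (Prod.Lex.toLex_le_toLex.1 (hmax m hm)).elim le_of_lt fun h ↦ h.1.le
    refine ⟨n, hn, ?_, fun k hk hkn ↦ (hmax k hk).lt_of_ne ((tilted_injective hε hx).ne hkn)⟩
    exact (hle n hn).antisymm (by omega)
  · rintro ⟨n, hn, hx⟩
    refine ⟨coneSlice_subset_sublevel W ε n j hx, fun h ↦ ?_⟩
    have := h n hn
    rw [hx.1] at this
    omega

lemma ncard_sublevel_eq_add_sum (hfin : (sublevel W j).Finite) (hε : ε ≠ 0) (hj : 0 < j) :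
    (sublevel W j).ncard =
      (sublevel W (j - 1)).ncard + ∑ n ∈ W, (coneSlice W ε n j).ncard := by
  have hsub : sublevel W (j - 1) ⊆ sublevel W j := fun x hx n hn ↦ (hx n hn).trans (by omega)
  rw [← ncard_sdiff_add_ncard_of_subset hsub hfin, sublevel_sdiff_sublevel_sub_one hε hj, add_comm]
  congr 1
  exact (W.finite_toSet.ncard_biUnion (fun n _ ↦ hfin.subset (coneSlice_subset_sublevel W ε n j))
    (pairwiseDisjoint_coneSlice W ε j)).trans (finsum_mem_coe_finset _ _)

lemma exists_dotZ_pos_of_finite_sublevel (hfin : (sublevel W 0).Finite) (hx : x ≠ 0) :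
    ∃ n ∈ W, 0 < dotZ n x := by
  by_contra! hle
  have hinj : Function.Injective fun k : ℕ ↦ (k : ℤ) • x := fun k l hkl ↦
    Nat.cast_injective (smul_left_injective ℤ hx hkl)
  refine infinite_of_injective_forall_mem hinj (fun k ↦ ?_) hfin
  intro n hn
  rw [dotZ_smul_right]
  exact mul_nonpos_of_nonneg_of_nonpos k.cast_nonneg (hle n hn)

lemma dotZ_rot_pos_iff {δ : ℤ × ℤ} (hu : 0 < dotZ u x) (hδ : dotZ δ x = 0) :
    0 < ε * dotZ δ (rot x) ↔ 0 < ε * dotZ δ (rot u) := by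
  have hx : 0 < dotZ x x := dotZ_self_pos fun h ↦ by simp [h, dotZ] at hu
  have hkey : dotZ u x * (ε * dotZ δ (rot x)) = dotZ x x * (ε * dotZ δ (rot u)) := by
    simp only [dotZ, rot] at hδ ⊢
    linear_combination ε * (u.2 * x.1 - u.1 * x.2) * hδ
  rw [← mul_pos_iff_of_pos_left hu, hkey, mul_pos_iff_of_pos_left hx]

/-- The `ℤ`-linear parametrization of the lattice line `{x | dotZ u x = s}`, where
`dotZ u g = 1`. -/
def linePoint (u g : ℤ × ℤ) (s y : ℤ) : ℤ × ℤ := s • g + y • rot u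

lemma dotZ_linePoint (n u g : ℤ × ℤ) (s y : ℤ) :
    dotZ n (linePoint u g s y) = s * dotZ n g + y * dotZ n (rot u) := by
  rw [linePoint, dotZ_add_right, dotZ_smul_right, dotZ_smul_right]

lemma linePoint_injective (hu : u ≠ 0) (s : ℤ) : Function.Injective (linePoint u g s) := by
  have hrot : rot u ≠ 0 := fun h ↦ hu <| by simpa [rot, Prod.ext_iff, and_comm] using h
  exact fun y z h ↦ smul_left_injective ℤ hrot (add_left_cancel h)

lemma linePoint_mem_coneSlice_iff (hug : dotZ u g = 1) (hs : 0 < s) (y : ℤ) :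
    linePoint u g s y ∈ coneSlice W ε (d • u) (d * s) ↔
      ∀ m ∈ W.erase (d • u),
        0 < (dotZ (d • u - m) g : ℚ) + y / s * dotZ (d • u - m) (rot u) ∨
        0 = (dotZ (d • u - m) g : ℚ) + y / s * dotZ (d • u - m) (rot u) ∧
          0 < ε * dotZ (d • u - m) (rot u) := by
  have hsQ : (0 : ℚ) < s := mod_cast hs
  have hu : dotZ u (linePoint u g s y) = s := by
    rw [dotZ_linePoint, hug, dotZ_rot_self, mul_one, mul_zero, add_zero]
  have hscale (m : ℤ × ℤ) : (dotZ (d • u - m) g : ℚ) + y / s * dotZ (d • u - m) (rot u) =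
      dotZ (d • u - m) (linePoint u g s y) / s := by
    rw [dotZ_linePoint]
    push_cast
    field_simp
  simp only [coneSlice, mem_ofPred_eq, dotZ_smul_left, hu, true_and, Finset.mem_erase, and_imp,
    tilted_lt_tilted_iff, hscale, div_pos_iff_of_pos_right hsQ, eq_comm (a := (0 : ℚ)),
    div_eq_zero_iff, hsQ.ne', or_false, Int.cast_pos, Int.cast_eq_zero, eq_comm (a := (0 : ℤ))]
  refine forall_congr' fun m ↦ forall_comm.trans (forall₂_congr fun _ _ ↦ or_congr_right ?_)
  exact and_congr_right fun h ↦ dotZ_rot_pos_iff (by rwa [hu]) h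

/-- `n` is the normal of a facet of the polygon with normals `W`: up to scaling, the facet contains
two distinct lattice points. -/
def IsFacetNormal (W : Finset (ℤ × ℤ)) (n : ℤ × ℤ) : Prop :=
  ∃ p q : ℤ × ℤ, p ≠ q ∧ dotZ n p = dotZ n q ∧ 0 < dotZ n p ∧
    ∀ m ∈ W, dotZ m p ≤ dotZ n p ∧ dotZ m q ≤ dotZ n q

lemma affine_nonneg_of_dotZ_le {m p : ℤ × ℤ} (hug : dotZ u g = 1) (hp : 0 < dotZ u p)
    (hle : dotZ m p ≤ dotZ n p) :
    (0 : ℚ) ≤ dotZ (n - m) g + dotZ (rot g) p / dotZ u p * dotZ (n - m) (rot u) := by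
  have hpQ : (0 : ℚ) < dotZ u p := mod_cast hp
  have hexpand : dotZ (n - m) p =
      dotZ u p * dotZ (n - m) g + dotZ (rot g) p * dotZ (n - m) (rot u) := by
    conv_lhs => rw [eq_smul_add_smul_rot hug p]
    rw [dotZ_add_right, dotZ_smul_right, dotZ_smul_right]
  have hnonneg : (0 : ℚ) ≤ dotZ (n - m) p := by
    rw [dotZ_sub_left]
    exact_mod_cast sub_nonneg.2 hle
  refine (div_nonneg hnonneg hpQ.le).trans_eq ?_
  rw [hexpand]
  push_cast
  field_simp

lemma dotZ_ne_zero_of_dotZ_rot_eq_zero {δ : ℤ × ℤ} (hug : dotZ u g = 1) (hδ : δ ≠ 0)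
    (hrot : dotZ δ (rot u) = 0) : dotZ δ g ≠ 0 := by
  intro hg
  refine (dotZ_self_pos hδ).ne' ((congrArg (dotZ δ) (eq_smul_add_smul_rot hug δ)).trans ?_)
  rw [dotZ_add_right, dotZ_smul_right, dotZ_smul_right, hg, hrot, mul_zero, mul_zero, add_zero]

lemma exists_dotZ_smul_sub_rot_pos (hpos : ∀ x ≠ 0, ∃ m ∈ W, 0 < dotZ m x) {σ : ℤ} (hσ : σ ≠ 0)
    (hu : u ≠ 0) : ∃ m ∈ W.erase (d • u), 0 < σ * dotZ (d • u - m) (rot u) := by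
  have hrot : rot u ≠ 0 := fun h ↦ hu <| by simpa [rot, Prod.ext_iff, and_comm] using h
  obtain ⟨m, hm, hpos_m⟩ := hpos _ (smul_ne_zero (neg_ne_zero.2 hσ) hrot)
  rw [dotZ_smul_right] at hpos_m
  refine ⟨m, Finset.mem_erase.2 ⟨?_, hm⟩, ?_⟩
  · rintro rfl
    rw [dotZ_smul_left, dotZ_rot_self, mul_zero, mul_zero] at hpos_m
    exact hpos_m.false
  · rw [dotZ_sub_left, dotZ_smul_left, dotZ_rot_self]
    linarith

lemma exists_bounds_linePoint_mem_coneSlice (hpos : ∀ x ≠ 0, ∃ m ∈ W, 0 < dotZ m x) (hd : 0 < d)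
    (hug : dotZ u g = 1) (hface : IsFacetNormal W (d • u)) :
    ∃ α β : ℚ, α < β ∧ ∀ s y : ℤ, 0 < s →
      (linePoint u g s y ∈ coneSlice W 1 (d • u) (d * s) ↔ (y / s : ℚ) ∈ Ico α β) ∧
      (linePoint u g s y ∈ coneSlice W (-1) (d • u) (d * s) ↔ (y / s : ℚ) ∈ Ioc α β) := by
  have hu : u ≠ 0 := by
    rintro rfl
    simp [dotZ] at hug
  obtain ⟨p, q, hpq, hlevel, hp, hle⟩ := hface
  simp only [dotZ_smul_left, mul_right_inj' hd.ne', mul_pos_iff_of_pos_left hd] at hlevel hp hle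
  have hfeas {r : ℤ × ℤ} (hr : 0 < dotZ u r) (hle : ∀ m ∈ W, dotZ m r ≤ d * dotZ u r) (m)
      (hm : m ∈ W.erase (d • u)) : (0 : ℚ) ≤ dotZ (d • u - m) g +
        dotZ (rot g) r / dotZ u r * dotZ (d • u - m) (rot u) :=
    affine_nonneg_of_dotZ_le hug hr (by
      simpa only [dotZ_smul_left] using hle m (Finset.mem_of_mem_erase hm))
  have hfeas_p := hfeas hp fun m hm ↦ (hle m hm).1
  have hfeas_q := hfeas (hlevel ▸ hp) fun m hm ↦ (hle m hm).2
  obtain ⟨α, β, hIcc, hα, hβ⟩ := exists_forall_affine_nonneg_iff_mem_Icc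
    (A := fun m ↦ (dotZ (d • u - m) g : ℚ)) (B := fun m ↦ (dotZ (d • u - m) (rot u) : ℚ))
    (by simpa using exists_dotZ_smul_sub_rot_pos hpos one_ne_zero hu)
    (by simpa using exists_dotZ_smul_sub_rot_pos hpos (σ := -1) (by simp) hu) ⟨_, hfeas_p⟩
  have hαβ : α < β := by
    have hp_mem := (hIcc _).1 hfeas_p
    have hq_mem := (hIcc _).1 hfeas_q
    refine (hp_mem.1.trans hp_mem.2).lt_of_ne fun h ↦ hpq ?_
    have hpq_eq := (subsingleton_Icc_iff.2 h.ge) hp_mem hq_mem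
    rw [hlevel, div_left_inj' (mod_cast (hlevel ▸ hp).ne'), Int.cast_inj] at hpq_eq
    rw [eq_smul_add_smul_rot hug p, eq_smul_add_smul_rot hug q, hlevel, hpq_eq]
  have hne (m) (hm : m ∈ W.erase (d • u)) (hB : (dotZ (d • u - m) (rot u) : ℚ) = 0) :
      (dotZ (d • u - m) g : ℚ) ≠ 0 := by
    have hδ : d • u - m ≠ 0 := sub_ne_zero.2 (Finset.ne_of_mem_erase hm).symm
    exact_mod_cast dotZ_ne_zero_of_dotZ_rot_eq_zero hug hδ (mod_cast hB)
  refine ⟨α, β, hαβ, fun s y hs ↦ ⟨?_, ?_⟩⟩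
  · rw [← forall_affine_pos_or_iff_mem_Ico hIcc hαβ.le hβ hne, linePoint_mem_coneSlice_iff hug hs]
    simp
  · rw [← forall_affine_pos_or_iff_mem_Ioc hIcc hαβ.le hα hne, linePoint_mem_coneSlice_iff hug hs]
    simp

lemma ncard_coneSlice_smul (hd : d ≠ 0) (hug : dotZ u g = 1) (s : ℤ) :
    (coneSlice W ε (d • u) (d * s)).ncard =
      {y | linePoint u g s y ∈ coneSlice W ε (d • u) (d * s)}.ncard := by
  have hu : u ≠ 0 := by
    rintro rfl
    simp [dotZ] at hug
  refine (ncard_preimage_of_injective_subset_range (linePoint_injective hu s) fun x hx ↦ ?_).symm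
  refine ⟨dotZ (rot g) x, ?_⟩
  have hxs : dotZ u x = s := mul_left_cancel₀ hd (by rw [← dotZ_smul_left, hx.1])
  rw [linePoint, ← hxs, ← eq_smul_add_smul_rot hug]

lemma coneSlice_smul_eq_empty (hdj : ¬ d ∣ j) : coneSlice W ε (d • u) j = ∅ :=
  eq_empty_of_forall_notMem fun x hx ↦ hdj ⟨dotZ u x, by rw [← dotZ_smul_left, hx.1]⟩

lemma ncard_div_mem_Ico (hs : 0 < s) {α β : ℚ} (hαβ : α ≤ β) :
    ({y : ℤ | (y / s : ℚ) ∈ Ico α β}.ncard : ℤ) = ⌈β * s⌉ - ⌈α * s⌉ := by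
  have hsQ : (0 : ℚ) < s := mod_cast hs
  have hIco : {y : ℤ | (y / s : ℚ) ∈ Ico α β} = Finset.Ico ⌈α * s⌉ ⌈β * s⌉ := by
    ext y
    simp [le_div_iff₀ hsQ, div_lt_iff₀ hsQ, Int.ceil_le, Int.lt_ceil]
  rw [hIco, ncard_coe_finset, Int.card_Ico, Int.toNat_sub_of_le (by gcongr)]

lemma ncard_div_mem_Ioc (hs : 0 < s) {α β : ℚ} (hαβ : α ≤ β) :
    ({y : ℤ | (y / s : ℚ) ∈ Ioc α β}.ncard : ℤ) = ⌊β * s⌋ - ⌊α * s⌋ := by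
  have hsQ : (0 : ℚ) < s := mod_cast hs
  have hIoc : {y : ℤ | (y / s : ℚ) ∈ Ioc α β} = Finset.Ioc ⌊α * s⌋ ⌊β * s⌋ := by
    ext y
    simp [lt_div_iff₀ hsQ, div_le_iff₀ hsQ, Int.le_floor, Int.floor_lt]
  rw [hIoc, ncard_coe_finset, Int.card_Ioc, Int.toNat_sub_of_le (by gcongr)]

lemma ncard_coneSlice_eq (hpos : ∀ x ≠ 0, ∃ m ∈ W, 0 < dotZ m x) (hface : IsFacetNormal W n) :
    ∃ (d : ℤ) (u : ℤ × ℤ) (α β : ℚ), 0 < d ∧ IsCoprime u.1 u.2 ∧ n = d • u ∧ α < β ∧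
      (∀ j > 0, ((coneSlice W 1 n j).ncard : ℤ) = if d ∣ j then ⌈β * j⌉ - ⌈α * j⌉ else 0) ∧
      ∀ j > 0, ((coneSlice W (-1) n j).ncard : ℤ) = if d ∣ j then ⌊β * j⌋ - ⌊α * j⌋ else 0 := by
  have hn : n ≠ 0 := by
    rintro rfl
    obtain ⟨p, q, -, -, hp, -⟩ := hface
    simp [dotZ] at hp
  obtain ⟨d, u, hd, hu, rfl⟩ := exists_eq_smul_isCoprime hn
  obtain ⟨a, b, hab⟩ := id hu
  have hug : dotZ u (a, b) = 1 := by rw [← hab, dotZ, mul_comm, mul_comm u.2]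
  obtain ⟨α, β, hαβ, hmem⟩ := exists_bounds_linePoint_mem_coneSlice hpos hd hug hface
  have hdQ : (0 : ℚ) < d := mod_cast hd
  have hscale (γ : ℚ) (s : ℤ) : γ / d * (d * s : ℤ) = γ * s := by
    push_cast
    field_simp
  refine ⟨d, u, α / d, β / d, hd, hu, rfl, div_lt_div_of_pos_right hαβ hdQ, ?_, ?_⟩ <;>
    intro j hj <;> split_ifs with hdj
  · obtain ⟨s, rfl⟩ := hdj
    have hs : 0 < s := pos_of_mul_pos_right hj hd.le
    rw [ncard_coneSlice_smul hd.ne' hug, hscale, hscale, ← ncard_div_mem_Ico hs hαβ.le]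
    simp only [(hmem s _ hs).1]
  · rw [coneSlice_smul_eq_empty hdj, ncard_empty, Nat.cast_zero]
  · obtain ⟨s, rfl⟩ := hdj
    have hs : 0 < s := pos_of_mul_pos_right hj hd.le
    rw [ncard_coneSlice_smul hd.ne' hug, hscale, hscale, ← ncard_div_mem_Ioc hs hαβ.le]
    simp only [(hmem s _ hs).2]
  · rw [coneSlice_smul_eq_empty hdj, ncard_empty, Nat.cast_zero]

/-- The lattice point count of the `T`-th dilate, extended to `T < 0` by the symmetry
`T ↦ -1 - T` of Ehrhart reciprocity. -/
noncomputable def symmCount (W : Finset (ℤ × ℤ)) (T : ℤ) : ℤ := (sublevel W (max T (-1 - T))).ncard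

lemma ceilSum_neg {ι : Type*} (W : Finset ι) (d : ι → ℤ) (α β : ι → ℚ) (j : ℤ) :
    ceilSum W d α β (-j) = -∑ n ∈ W, if d n ∣ j then ⌊β n * j⌋ - ⌊α n * j⌋ else 0 := by
  rw [ceilSum, ← Finset.sum_neg_distrib]
  refine Finset.sum_congr rfl fun n _ ↦ ?_
  simp only [dvd_neg, Int.cast_neg, mul_neg, Int.ceil_neg]
  split_ifs <;> ring

lemma symmCount_neg_one_sub (W : Finset (ℤ × ℤ)) (T : ℤ) :
    symmCount W (-1 - T) = symmCount W T := by
  rw [symmCount, symmCount, sub_sub_cancel, max_comm]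

lemma symmCount_of_nonneg {T : ℤ} (hT : 0 ≤ T) : symmCount W T = (sublevel W T).ncard := by
  rw [symmCount, max_eq_left (by omega)]

lemma symmCount_eq_add_ceilSum {d : ℤ × ℤ → ℤ} {α β : ℤ × ℤ → ℚ}
    (hfin : ∀ T, (sublevel W T).Finite)
    (hceil : ∀ n ∈ W, ∀ j > 0, ((coneSlice W 1 n j).ncard : ℤ) =
      if d n ∣ j then ⌈β n * j⌉ - ⌈α n * j⌉ else 0)
    (hfloor : ∀ n ∈ W, ∀ j > 0, ((coneSlice W (-1) n j).ncard : ℤ) =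
      if d n ∣ j then ⌊β n * j⌋ - ⌊α n * j⌋ else 0) (T : ℤ) :
    symmCount W T = symmCount W (T - 1) + ceilSum W d α β T := by
  have hstep {j : ℤ} (hj : 0 < j) :
      symmCount W j = symmCount W (j - 1) + ceilSum W d α β j := by
    rw [symmCount_of_nonneg hj.le, symmCount_of_nonneg (by omega),
      ncard_sublevel_eq_add_sum (hfin j) one_ne_zero hj, ceilSum]
    push_cast
    rw [Finset.sum_congr rfl fun n hn ↦ hceil n hn j hj]
  have hstep_neg {j : ℤ} (hj : 0 < j) :
      symmCount W j = symmCount W (j - 1) - ceilSum W d α β (-j) := by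
    rw [symmCount_of_nonneg hj.le, symmCount_of_nonneg (by omega),
      ncard_sublevel_eq_add_sum (hfin j) (neg_ne_zero.2 one_ne_zero) hj, ceilSum_neg]
    push_cast
    rw [Finset.sum_congr rfl fun n hn ↦ hfloor n hn j hj, sub_neg_eq_add]
  rcases lt_trichotomy T 0 with hT | rfl | hT
  · have hTneg := hstep_neg (neg_pos.2 hT)
    rw [neg_neg, show -T - 1 = -1 - T by ring, show -T = -1 - (T - 1) by ring,
      symmCount_neg_one_sub, symmCount_neg_one_sub] at hTneg
    linarith
  · simpa [ceilSum] using symmCount_neg_one_sub W (-1)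
  · exact hstep hT

lemma monotoneOn_symmCount (hfin : ∀ T, (sublevel W T).Finite) :
    MonotoneOn (symmCount W) (Ici 0) := by
  intro S hS T hT hST
  rw [symmCount_of_nonneg hS, symmCount_of_nonneg hT, Nat.cast_le]
  exact ncard_le_ncard (fun x hx n hn ↦ (hx n hn).trans hST) (hfin T)

theorem exists_eq_smul_isCoprime_of_ncard_sublevel {D : ℤ} {c : Polynomial ℚ}
    (hfin : ∀ T, (sublevel W T).Finite) (hface : ∀ n ∈ W, IsFacetNormal W n) (hD : 0 < D)
    (hc : ∀ t : ℕ, 0 < t → ((sublevel W (D * t)).ncard : ℚ) = c.eval (t : ℚ))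
    (hW : sublevel W (D - 1) = sublevel W 0) (hn : n ∈ W) :
    ∃ u : ℤ × ℤ, IsCoprime u.1 u.2 ∧ n = D • u := by
  have hpos (x : ℤ × ℤ) (hx : x ≠ 0) := exists_dotZ_pos_of_finite_sublevel (hfin 0) hx
  choose! d u α β hd hu hdu hαβ hceil hfloor using fun n hn ↦ ncard_coneSlice_eq hpos (hface n hn)
  refine ⟨u n, hu n hn, ?_⟩
  rw [← eq_of_apply_mul_eq_eval hd hαβ (symmCount_eq_add_ceilSum hfin hceil hfloor)
    (symmCount_neg_one_sub W) (monotoneOn_symmCount hfin) hD (c := c) ?_ ?_ hn]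
  · exact hdu n hn
  · intro t ht
    rw [symmCount_of_nonneg (by positivity), ← hc t ht, Int.cast_natCast]
  · rw [symmCount_of_nonneg (by omega), symmCount_of_nonneg le_rfl, hW]

end LatticePolygon

section PolarDual

open scoped Topology

variable {S P E : Set (ℝ × ℝ)} {u w z a b x : ℝ × ℝ} {c : ℝ}

/-- The linear functional `⟨u, ·⟩` on `ℝ²`. -/
noncomputable def dotL (u : ℝ × ℝ) : ℝ × ℝ →L[ℝ] ℝ :=
  u.1 • .fst ℝ ℝ ℝ + u.2 • .snd ℝ ℝ ℝ

lemma dotL_apply (u x : ℝ × ℝ) : dotL u x = dotR u x := by simp [dotL, dotR]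

lemma dotL_surjective : Function.Surjective dotL := by
  refine fun f ↦ ⟨(f (1, 0), f (0, 1)), ?_⟩
  ext <;> simp [dotL]

lemma dotR_comm (u x : ℝ × ℝ) : dotR u x = dotR x u := by
  simp only [dotR]
  ring

lemma dotR_add_left (u w x : ℝ × ℝ) : dotR (u + w) x = dotR u x + dotR w x := by
  simp only [dotR, Prod.fst_add, Prod.snd_add]
  ring

lemma dotR_smul_left (c : ℝ) (u x : ℝ × ℝ) : dotR (c • u) x = c * dotR u x := by
  simp only [dotR, Prod.smul_fst, Prod.smul_snd, smul_eq_mul]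
  ring

lemma dotR_smul_right (c : ℝ) (u x : ℝ × ℝ) : dotR u (c • x) = c * dotR u x := by
  rw [dotR_comm, dotR_smul_left, dotR_comm]

lemma dotR_zero_left (x : ℝ × ℝ) : dotR 0 x = 0 := by simp [dotR]

lemma dotR_zero_right (u : ℝ × ℝ) : dotR u 0 = 0 := by simp [dotR]

lemma norm_sq_le_dotR_self (u : ℝ × ℝ) : ‖u‖ ^ 2 ≤ dotR u u := by
  rw [dotR, Prod.norm_def, Real.norm_eq_abs, Real.norm_eq_abs]
  rcases max_choice |u.1| |u.2| with h | h <;> rw [h, sq_abs] <;> nlinarith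

/-- The pole of the line through `a` and `b`: the solution `u` of `⟨u, a⟩ = ⟨u, b⟩ = 1`, as given by
Cramer's rule. It is meaningless if the line passes through the origin. -/
def linePole {K : Type*} [Field K] (a b : K × K) : K × K :=
  ((b.2 - a.2) / (a.1 * b.2 - a.2 * b.1), (a.1 - b.1) / (a.1 * b.2 - a.2 * b.1))

lemma qpt_linePole (a b : ℚ × ℚ) : qpt (linePole a b) = linePole (qpt a) (qpt b) := by
  simp [qpt, linePole]

lemma eq_linePole (hab : a ≠ b) (ha : dotR u a = 1) (hb : dotR u b = 1) : u = linePole a b := by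
  have hdet : a.1 * b.2 - a.2 * b.1 ≠ 0 := by
    contrapose! hab
    unfold dotR at ha hb
    exact Prod.ext (by linear_combination u.2 * hab - a.1 * hb + b.1 * ha)
      (by linear_combination -u.1 * hab - a.2 * hb + b.2 * ha)
  unfold dotR at ha hb
  refine Prod.ext ((eq_div_iff hdet).2 ?_) ((eq_div_iff hdet).2 ?_)
  · linear_combination b.2 * ha - a.2 * hb
  · linear_combination a.1 * hb - b.1 * ha

/-- The polar dual `P° = {u : ⟨u, a⟩ ≤ 1 for all a ∈ P}` of a set `P` in the plane. -/
def polarDual (P : Set (ℝ × ℝ)) : Set (ℝ × ℝ) := {u | ∀ a ∈ P, dotR u a ≤ 1}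

lemma subset_polarDual_polarDual : P ⊆ polarDual (polarDual P) := by
  intro x hx u hu
  rw [dotR_comm]
  exact hu x hx

lemma convex_polarDual : Convex ℝ (polarDual P) := by
  intro u hu w hw s t hs ht hst a ha
  rw [dotR_add_left, dotR_smul_left, dotR_smul_left]
  nlinarith [hu a ha, hw a ha]

lemma isClosed_polarDual : IsClosed (polarDual P) := by
  have : polarDual P = ⋂ a ∈ P, {u | dotR u a ≤ 1} := by
    ext u
    simp only [polarDual, mem_ofPred_eq, mem_iInter]
  rw [this]
  exact isClosed_biInter fun a _ ↦ isClosed_le (by unfold dotR; fun_prop) continuous_const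

lemma polarDual_convexHull : polarDual (convexHull ℝ S) = polarDual S := by
  refine Subset.antisymm (fun u hu a ha ↦ hu a (subset_convexHull ℝ S ha)) fun u hu a ha ↦ ?_
  rw [dotR_comm]
  exact convexHull_min (subset_polarDual_polarDual (P := S)) convex_polarDual ha u hu

lemma isCompact_polarDual (h0 : 0 ∈ interior P) : IsCompact (polarDual P) := by
  obtain ⟨ε, hε, hball⟩ := Metric.nhds_basis_closedBall.mem_iff.1 (mem_interior_iff_mem_nhds.1 h0)
  refine Metric.isCompact_of_isClosed_isBounded isClosed_polarDual
    (isBounded_iff_forall_norm_le.2 ⟨ε⁻¹, fun u hu ↦ ?_⟩)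
  rcases eq_or_ne u 0 with rfl | hu0
  · simpa using hε.le
  have hnorm : 0 < ‖u‖ := norm_pos_iff.2 hu0
  have hmem : (ε / ‖u‖) • u ∈ P := by
    apply hball
    rw [mem_closedBall_zero_iff, norm_smul, Real.norm_of_nonneg (by positivity),
      div_mul_cancel₀ _ hnorm.ne']
  have hdot := hu _ hmem
  rw [dotR_smul_right, div_mul_eq_mul_div, div_le_one hnorm] at hdot
  rw [le_inv_comm₀ hnorm hε, ← one_div, le_div_iff₀ hnorm]
  nlinarith [norm_sq_le_dotR_self u]

lemma polarDual_polarDual (hconv : Convex ℝ P) (hclosed : IsClosed P) (h0 : 0 ∈ P) :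
    polarDual (polarDual P) = P := by
  refine Subset.antisymm (fun x hx ↦ ?_) subset_polarDual_polarDual
  by_contra hxP
  obtain ⟨f, s, hfP, hfx⟩ := geometric_hahn_banach_closed_point hconv hclosed hxP
  obtain ⟨u, rfl⟩ := dotL_surjective f
  simp only [dotL_apply] at hfP hfx
  have hs : 0 < s := by simpa only [dotR_zero_right] using hfP 0 h0
  have hu : s⁻¹ • u ∈ polarDual P := fun a ha ↦ by
    rw [dotR_smul_left, inv_mul_le_one₀ hs]
    exact (hfP a ha).le
  have hxu := hx _ hu
  rw [dotR_smul_right, inv_mul_le_one₀ hs, dotR_comm] at hxu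
  exact hfx.not_ge hxu

lemma mem_smul_polarDual_iff (hc : 0 < c) : x ∈ c • polarDual S ↔ ∀ a ∈ S, dotR x a ≤ c := by
  simp only [mem_smul_set_iff_inv_smul_mem₀ hc.ne', polarDual, mem_ofPred_eq, dotR_smul_left,
    inv_mul_le_one₀ hc]

lemma smul_polarDual_smul (hc : 0 < c) : c • polarDual (c • S) = polarDual S := by
  ext x
  rw [mem_smul_polarDual_iff hc, ← image_smul, forall_mem_image]
  simp only [dotR_smul_right, polarDual, mem_ofPred_eq, mul_le_iff_le_one_right hc]

lemma exists_pos_add_smul_mem (hx : x ∈ interior P) (y : ℝ × ℝ) :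
    ∃ s : ℝ, 0 < s ∧ x + s • y ∈ P := by
  have hcont : Continuous fun s : ℝ ↦ x + s • y := by fun_prop
  have hnhds : ∀ᶠ s in 𝓝 (0 : ℝ), x + s • y ∈ P := by
    refine hcont.continuousAt.eventually_mem ?_
    rwa [zero_smul, add_zero, ← mem_interior_iff_mem_nhds]
  have hpos : ∀ᶠ s in 𝓝[>] (0 : ℝ), 0 < s := self_mem_nhdsWithin
  exact (hpos.and (hnhds.filter_mono nhdsWithin_le_nhds)).exists

lemma dotR_lt_one_of_mem_interior (hx : x ∈ interior P) (hu : u ∈ polarDual P) :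
    dotR u x < 1 := by
  obtain ⟨s, hs, hsP⟩ := exists_pos_add_smul_mem hx x
  have hsx := hu _ hsP
  rw [dotR_comm, dotR_add_left, dotR_smul_left, dotR_comm] at hsx
  nlinarith

lemma interior_polarDual_of_finite (hS : S.Finite) :
    interior (polarDual S) = {x | ∀ a ∈ S, dotR x a < 1} := by
  refine Subset.antisymm (fun x hx a ha ↦ ?_) (interior_maximal (fun x hx a ha ↦ (hx a ha).le) ?_)
  · rw [dotR_comm]
    exact dotR_lt_one_of_mem_interior hx (subset_polarDual_polarDual ha)
  · have : {x | ∀ a ∈ S, dotR x a < 1} = ⋂ a ∈ S, {x | dotR x a < 1} := by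
      ext x
      simp only [mem_ofPred_eq, mem_iInter]
    rw [this]
    exact hS.isOpen_biInter fun a _ ↦ isOpen_lt (by unfold dotR; fun_prop) continuous_const

lemma mem_extremePoints_polarDual (hu : u ∈ polarDual P) (ha : a ∈ P) (hb : b ∈ P) (hab : a ≠ b)
    (hua : dotR u a = 1) (hub : dotR u b = 1) : u ∈ (polarDual P).extremePoints ℝ := by
  refine mem_extremePoints_iff_left.2 ⟨hu, ?_⟩
  rintro w hw w' hw' ⟨s, t, hs, ht, hst, rfl⟩
  have htight : ∀ y ∈ P, dotR (s • w + t • w') y = 1 → dotR w y = 1 := by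
    intro y hy h
    rw [dotR_add_left, dotR_smul_left, dotR_smul_left] at h
    nlinarith [hw y hy, hw' y hy]
  rw [eq_linePole hab hua hub]
  exact eq_linePole hab (htight a ha hua) (htight b hb hub)

lemma eq_zero_of_mem_extremePoints_polarDual (hS : S.Finite)
    (hw : w ∈ (polarDual S).extremePoints ℝ) (hz : ∀ a ∈ S, dotR w a = 1 → dotR z a = 0) :
    z = 0 := by
  have hnhds : ∀ᶠ s in 𝓝 (0 : ℝ), w + s • z ∈ polarDual S := by
    simp only [polarDual, mem_ofPred_eq, dotR_add_left, dotR_smul_left]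
    refine hS.eventually_all.2 fun a ha ↦ ?_
    rcases (hw.1 a ha).eq_or_lt with h | h
    · simp only [hz a ha h, h, mul_zero, add_zero, le_refl, Filter.eventually_true]
    · have hcont : Continuous fun s ↦ dotR w a + s * dotR z a := by fun_prop
      filter_upwards [hcont.continuousAt.eventually_lt (x₀ := 0) continuousAt_const
        (by simpa using h)] with s hs using hs.le
  obtain ⟨ε, hε, hball⟩ := Metric.nhds_basis_closedBall.eventually_iff.1 hnhds
  have hadd := hball (show ε ∈ Metric.closedBall 0 ε by simp [abs_of_pos hε])
  have hsub := hball (show -ε ∈ Metric.closedBall 0 ε by simp [abs_of_pos hε])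
  have hmid : w ∈ openSegment ℝ (w + ε • z) (w + -ε • z) :=
    ⟨1 / 2, 1 / 2, by norm_num, by norm_num, by norm_num, by module⟩
  have heq := (mem_extremePoints_iff_left.1 hw).2 _ hadd _ hsub hmid
  exact (smul_eq_zero.1 (add_eq_left.1 heq)).resolve_left hε.ne'

lemma exists_ne_dotR_eq_one_of_mem_extremePoints (hS : S.Finite)
    (hw : w ∈ (polarDual S).extremePoints ℝ) :
    ∃ a ∈ S, ∃ b ∈ S, a ≠ b ∧ dotR w a = 1 ∧ dotR w b = 1 := by
  by_contra! hne
  by_cases htight : ∃ a ∈ S, dotR w a = 1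
  · obtain ⟨a, ha, hwa⟩ := htight
    have horth := eq_zero_of_mem_extremePoints_polarDual hS hw (z := (-a.2, a.1)) ?_
    · have ha0 : a = 0 :=
        Prod.ext (congrArg Prod.snd horth) (neg_eq_zero.1 (congrArg Prod.fst horth))
      rw [ha0, dotR_zero_right] at hwa
      exact zero_ne_one hwa
    · intro b hb hwb
      rw [show b = a by by_contra h; exact hne a ha b hb (Ne.symm h) hwa hwb, dotR]
      ring
  · push Not at htight
    have horth := eq_zero_of_mem_extremePoints_polarDual hS hw (z := (1, 0))
      fun a ha hwa ↦ absurd hwa (htight a ha)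
    exact one_ne_zero (congrArg Prod.fst horth)

lemma extremePoints_polarDual_subset_image_linePole (hS : S.Finite) :
    (polarDual S).extremePoints ℝ ⊆ image2 linePole S S := by
  intro w hw
  obtain ⟨a, ha, b, hb, hab, hwa, hwb⟩ := exists_ne_dotR_eq_one_of_mem_extremePoints hS hw
  exact ⟨a, ha, b, hb, (eq_linePole hab hwa hwb).symm⟩

lemma finite_extremePoints_polarDual (hS : S.Finite) : ((polarDual S).extremePoints ℝ).Finite :=
  (hS.image2 _ hS).subset (extremePoints_polarDual_subset_image_linePole hS)

lemma extremePoints_polarDual_subset_range_qpt (hS : S.Finite) (hSq : S ⊆ range qpt) :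
    (polarDual S).extremePoints ℝ ⊆ range qpt := by
  intro w hw
  obtain ⟨a, ha, b, hb, rfl⟩ := extremePoints_polarDual_subset_image_linePole hS hw
  obtain ⟨a, rfl⟩ := hSq ha
  obtain ⟨b, rfl⟩ := hSq hb
  exact ⟨_, qpt_linePole a b⟩

lemma polarDual_eq_convexHull_extremePoints (hS : S.Finite) (h0 : 0 ∈ interior (convexHull ℝ S)) :
    polarDual S = convexHull ℝ ((polarDual S).extremePoints ℝ) := by
  have hcomp : IsCompact (polarDual S) := polarDual_convexHull (S := S) ▸ isCompact_polarDual h0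
  rw [← (finite_extremePoints_polarDual hS).isClosed_convexHull (𝕜 := ℝ) |>.closure_eq,
    closure_convexHull_extremePoints hcomp convex_polarDual]

lemma polarDual_extremePoints_polarDual (hS : S.Finite) (h0 : 0 ∈ interior (convexHull ℝ S)) :
    polarDual ((polarDual S).extremePoints ℝ) = convexHull ℝ S := by
  rw [← polarDual_convexHull, ← polarDual_eq_convexHull_extremePoints hS h0,
    ← polarDual_convexHull (S := S)]
  exact polarDual_polarDual (convex_convexHull ℝ S) (hS.isClosed_convexHull (𝕜 := ℝ))
    (interior_subset h0)

lemma not_isEdge_self (hP : (interior P).Nonempty) : ¬IsEdge P P := by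
  rintro ⟨-, hrank⟩
  have htop : affineSpan ℝ P = ⊤ := affineSpan_eq_top_of_nonempty_interior
    (hP.mono (interior_mono (subset_convexHull ℝ P)))
  rw [AffineSubspace.vectorSpan_eq_top_of_affineSpan_eq_top ℝ _ _ htop, finrank_top,
    Module.finrank_prod, Module.finrank_self] at hrank
  norm_num at hrank

lemma pos_of_forall_dotR_le (h0 : 0 ∈ interior P) (hu : u ≠ 0) (h : ∀ a ∈ P, dotR u a ≤ c) :
    0 < c := by
  obtain ⟨s, hs, hsP⟩ := exists_pos_add_smul_mem h0 u
  have hsu := h _ hsP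
  rw [zero_add, dotR_smul_right] at hsu
  have hpos : 0 < dotR u u := (pow_pos (norm_pos_iff.2 hu) 2).trans_le (norm_sq_le_dotR_self u)
  exact (mul_pos hs hpos).trans_le hsu

lemma exists_mem_extremePoints_polarDual_of_isEdge (h0 : 0 ∈ interior P) (hE : IsEdge P E) :
    ∃ u ∈ (polarDual P).extremePoints ℝ, ∀ a ∈ E, dotR u a = 1 := by
  have hnontriv : ¬E.Subsingleton := by
    intro h
    have hrank := hE.2
    rw [(vectorSpan_eq_bot_iff_subsingleton ℝ).2 h, finrank_bot] at hrank
    exact zero_ne_one hrank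
  obtain ⟨a, ha, b, hb, hab⟩ := not_subsingleton_iff.1 hnontriv
  obtain ⟨f, hf⟩ := hE.1 ⟨a, ha⟩
  obtain ⟨u, rfl⟩ := dotL_surjective f
  simp only [dotL_apply] at hf
  have hmem (x) (hx : x ∈ E) : x ∈ P ∧ ∀ y ∈ P, dotR u y ≤ dotR u x := by rwa [hf] at hx
  have hu : u ≠ 0 := by
    rintro rfl
    simp only [dotR_zero_left, le_refl, implies_true, and_true] at hf
    rw [hf] at hE
    exact not_isEdge_self ⟨0, h0⟩ hE
  have hpos : 0 < dotR u a := pos_of_forall_dotR_le h0 hu (hmem a ha).2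
  have hone (x) (hx : x ∈ E) : dotR ((dotR u a)⁻¹ • u) x = 1 := by
    rw [dotR_smul_left, inv_mul_eq_one₀ hpos.ne']
    exact ((hmem x hx).2 a (hmem a ha).1).antisymm ((hmem a ha).2 x (hmem x hx).1)
  refine ⟨_, mem_extremePoints_polarDual (fun x hx ↦ ?_) (hmem a ha).1 (hmem b hb).1 hab
    (hone a ha) (hone b hb), hone⟩
  rw [dotR_smul_left, inv_mul_le_one₀ hpos]
  exact (hmem a ha).2 x hx

lemma isEdge_setOf_dotR_eq_one (hu : u ∈ polarDual P) (ha : a ∈ P) (hb : b ∈ P) (hab : a ≠ b)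
    (hua : dotR u a = 1) (hub : dotR u b = 1) : IsEdge P {x ∈ P | dotR u x = 1} := by
  refine ⟨fun _ ↦ ⟨dotL u, ?_⟩, le_antisymm ?_ ?_⟩
  · ext x
    simp only [mem_ofPred_eq, dotL_apply]
    refine and_congr_right fun hx ↦ ⟨fun h y hy ↦ h ▸ hu y hy, fun h ↦ ?_⟩
    exact (hu x hx).antisymm (hua ▸ h a ha)
  · have hdotL : (dotL u).toLinearMap ≠ 0 := by
      intro h
      have hzero : dotL u a = 0 := LinearMap.congr_fun h a
      rw [dotL_apply, hua] at hzero
      exact one_ne_zero hzero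
    have hker : vectorSpan ℝ {x ∈ P | dotR u x = 1} ≤ (dotL u).toLinearMap.ker := by
      rw [vectorSpan_def, Submodule.span_le]
      rintro _ ⟨x, hx, y, hy, rfl⟩
      change dotL u (x - y) = 0
      rw [map_sub, dotL_apply, dotL_apply, hx.2, hy.2, sub_self]
    have hfinrank := Module.Dual.finrank_ker_add_one_of_ne_zero hdotL
    rw [Module.finrank_prod, Module.finrank_self] at hfinrank
    have := Submodule.finrank_mono hker
    omega
  · rw [Submodule.one_le_finrank_iff, Ne, vectorSpan_eq_bot_iff_subsingleton]
    exact fun h ↦ hab (h ⟨ha, hua⟩ ⟨hb, hub⟩)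

end PolarDual

lemma exists_finset_image_eq {α β : Type*} {f : α → β} {F : Set β} (hF : F.Finite)
    (hFf : F ⊆ range f) : ∃ W : Finset α, f '' W = F := by
  classical
  lift F to Finset β using hF
  obtain ⟨W, -, rfl⟩ := Finset.subset_set_image_iff.1 (image_univ ▸ hFf)
  exact ⟨W, Finset.coe_image.symm⟩

section LatticePoints

variable {S F : Set (ℝ × ℝ)} {N M : Finset (ℤ × ℤ)} {D : ℤ} {w : ℝ × ℝ}

lemma zpt_injective : Function.Injective zpt := by
  intro x y h
  simpa [zpt, Prod.ext_iff] using h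

lemma latticePts_eq_range_zpt : latticePts = range zpt := by
  ext p
  simp only [latticePts, mem_ofPred_eq, mem_range, Prod.exists, zpt, eq_comm]

lemma zpt_smul (d : ℤ) (x : ℤ × ℤ) : zpt (d • x) = (d : ℝ) • zpt x := by
  simp [zpt]

lemma dotR_zpt (n x : ℤ × ℤ) : dotR (zpt n) (zpt x) = dotZ n x := by
  simp [dotR, zpt, dotZ]

lemma finite_preimage_zpt (hS : IsCompact S) : (zpt ⁻¹' S).Finite := by
  have hemb : Topology.IsClosedEmbedding zpt :=
    Int.isClosedEmbedding_coe_real.prodMap Int.isClosedEmbedding_coe_real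
  exact isCompact_iff_finite.1 (hemb.isCompact_preimage hS)

lemma exists_zpt_eq_natCast_den_mul_smul_qpt (w : ℚ × ℚ) :
    ∃ n : ℤ × ℤ, zpt n = (w.1.den * w.2.den : ℝ) • qpt w := by
  refine ⟨(w.1.num * w.2.den, w.1.den * w.2.num), ?_⟩
  simp only [zpt, qpt, Prod.smul_mk, smul_eq_mul, Int.cast_mul, Int.cast_natCast, Rat.cast_def]
  field_simp

lemma exists_image_zpt_eq_smul (hF : F.Finite) (hFq : F ⊆ range qpt) :
    ∃ (D : ℤ) (N : Finset (ℤ × ℤ)), 0 < D ∧ zpt '' N = (D : ℝ) • F := by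
  classical
  obtain ⟨W, rfl⟩ := exists_finset_image_eq hF hFq
  let D : ℕ := ∏ w ∈ W, w.1.den * w.2.den
  have hD : 0 < D := Finset.prod_pos fun w _ ↦ by positivity
  have hint : ∀ w ∈ W, ∃ n : ℤ × ℤ, zpt n = (D : ℝ) • qpt w := by
    intro w hw
    obtain ⟨k, hk⟩ : w.1.den * w.2.den ∣ D := Finset.dvd_prod_of_mem _ hw
    obtain ⟨n, hn⟩ := exists_zpt_eq_natCast_den_mul_smul_qpt w
    refine ⟨(k : ℤ) • n, ?_⟩
    rw [zpt_smul, hn, smul_smul, hk]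
    push_cast
    rw [mul_comm]
  choose! n hn using hint
  refine ⟨D, W.image n, by exact_mod_cast hD, ?_⟩
  rw [Finset.coe_image, image_image, Int.cast_natCast, ← image_smul, image_image]
  exact image_congr hn

lemma preimage_zpt_smul_polarDual (N : Finset (ℤ × ℤ)) (hD : 0 < D) :
    zpt ⁻¹' ((D : ℝ) • polarDual (zpt '' N)) = sublevel N D := by
  ext x
  rw [mem_preimage, mem_smul_polarDual_iff (by exact_mod_cast hD), forall_mem_image]
  simp only [dotR_comm (zpt x), dotR_zpt, Int.cast_le]
  rfl

lemma finite_sublevel (hN : IsCompact (polarDual (zpt '' N))) (T : ℤ) : (sublevel N T).Finite := by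
  have hfin := finite_preimage_zpt (hN.smul ((max T 1 : ℤ) : ℝ))
  rw [preimage_zpt_smul_polarDual N (by positivity)] at hfin
  exact hfin.subset fun x hx n hn ↦ (hx n hn).trans (le_max_left T 1)

lemma sublevel_zero_eq (hN : (sublevel N 0).Finite) : sublevel N 0 = {0} := by
  refine Subset.antisymm (fun x hx ↦ ?_) ?_
  · by_contra hx0
    obtain ⟨n, hn, hpos⟩ := exists_dotZ_pos_of_finite_sublevel hN hx0
    exact hpos.not_ge (hx n hn)
  · rintro _ rfl n -
    exact (dotZ_zero_right n).le

lemma ehr_polarDual (hD : 0 < D) (hN : zpt '' N = (D : ℝ) • F) {t : ℕ} (ht : 0 < t) :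
    ehr (polarDual F) t = (sublevel N (D * t)).ncard := by
  have hD' : (0 : ℝ) < D := by exact_mod_cast hD
  have hscale : (t : ℝ) • polarDual F = ((D * t : ℤ) : ℝ) • polarDual (zpt '' N) := by
    rw [hN, ← smul_polarDual_smul hD', smul_smul]
    push_cast
    rw [mul_comm]
  rw [ehr, hscale, latticePts_eq_range_zpt, ← image_preimage_eq_inter_range,
    preimage_zpt_smul_polarDual N (by positivity), ncard_image_of_injective _ zpt_injective]

lemma interior_polarDual_inter_latticePts (hF : F.Finite) (hD : 0 < D)
    (hN : zpt '' N = (D : ℝ) • F) :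
    interior (polarDual F) ∩ latticePts = zpt '' sublevel N (D - 1) := by
  have hD' : (0 : ℝ) < D := by exact_mod_cast hD
  rw [latticePts_eq_range_zpt, ← image_preimage_eq_inter_range, interior_polarDual_of_finite hF]
  congr 1
  ext x
  have hdot : (∀ a ∈ F, dotR (zpt x) a < 1) ↔ ∀ b ∈ (D : ℝ) • F, dotR (zpt x) b < D := by
    rw [← image_smul, forall_mem_image]
    simp only [dotR_smul_right, mul_lt_iff_lt_one_right hD']
  rw [mem_preimage, mem_ofPred_eq, hdot, ← hN, forall_mem_image]
  simp only [dotR_comm (zpt x), dotR_zpt, Int.cast_lt, ← Int.le_sub_one_iff]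
  rfl

lemma isFacetNormal_of_image_zpt_eq (hS : S.Finite) {E : ℤ} (hD : 0 < D) (hE : 0 < E)
    (hN : zpt '' N = (D : ℝ) • (polarDual S).extremePoints ℝ) (hM : zpt '' M = (E : ℝ) • S)
    {n : ℤ × ℤ} (hn : n ∈ N) : IsFacetNormal N n := by
  have hD' : (0 : ℝ) < D := by exact_mod_cast hD
  have hE' : (0 : ℝ) < E := by exact_mod_cast hE
  have hlower (m) (hm : m ∈ N) : ∃ w ∈ (polarDual S).extremePoints ℝ, (D : ℝ) • w = zpt m :=
    mem_smul_set.1 (hN ▸ mem_image_of_mem zpt hm)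
  have hlift (a) (ha : a ∈ S) : ∃ p : ℤ × ℤ, zpt p = (E : ℝ) • a := by
    obtain ⟨p, -, hp⟩ : (E : ℝ) • a ∈ zpt '' M := hM ▸ smul_mem_smul_set ha
    exact ⟨p, hp⟩
  have hdot {m p : ℤ × ℤ} {w a : ℝ × ℝ} (hw : (D : ℝ) • w = zpt m) (ha : zpt p = (E : ℝ) • a) :
      (dotZ m p : ℝ) = D * E * dotR w a := by
    rw [← dotR_zpt, ← hw, ha, dotR_smul_left, dotR_smul_right, mul_assoc]
  obtain ⟨w, hw, hwn⟩ := hlower n hn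
  obtain ⟨a, ha, b, hb, hab, hwa, hwb⟩ := exists_ne_dotR_eq_one_of_mem_extremePoints hS hw
  obtain ⟨p, hp⟩ := hlift a ha
  obtain ⟨q, hq⟩ := hlift b hb
  have hnp := hdot hwn hp
  have hnq := hdot hwn hq
  rw [hwa, mul_one, ← Int.cast_mul, Int.cast_inj] at hnp
  rw [hwb, mul_one, ← Int.cast_mul, Int.cast_inj] at hnq
  refine ⟨p, q, ?_, hnp.trans hnq.symm, hnp ▸ mul_pos hD hE, fun m hm ↦ ?_⟩
  · rintro rfl
    exact hab (smul_right_injective _ hE'.ne' (hp.symm.trans hq))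
  · obtain ⟨w', hw', hwm⟩ := hlower m hm
    rw [hnp, hnq, ← Int.cast_le (R := ℝ), ← Int.cast_le (R := ℝ), hdot hwm hp, hdot hwm hq]
    push_cast
    simp only [mul_le_iff_le_one_right (mul_pos hD' hE')]
    exact ⟨hw'.1 a ha, hw'.1 b hb⟩

theorem exists_isCoprime_zpt_eq_of_mem_extremePoints (hS : S.Finite) (hSq : S ⊆ range qpt)
    (h0 : 0 ∈ interior (convexHull ℝ S)) (hPIP : IsPIP (convexHull ℝ S))
    (hint : interior (convexHull ℝ S) ∩ latticePts = {(0, 0)})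
    (hw : w ∈ (polarDual S).extremePoints ℝ) : ∃ u : ℤ × ℤ, IsCoprime u.1 u.2 ∧ zpt u = w := by
  have hF := finite_extremePoints_polarDual hS
  obtain ⟨D, N, hD, hN⟩ :=
    exists_image_zpt_eq_smul hF (extremePoints_polarDual_subset_range_qpt hS hSq)
  obtain ⟨E, M, hE, hM⟩ := exists_image_zpt_eq_smul hS hSq
  have hD' : (0 : ℝ) < D := by exact_mod_cast hD
  have hP := polarDual_extremePoints_polarDual hS h0
  have hcomp : IsCompact (polarDual (zpt '' N)) := by
    rw [hN, (eq_inv_smul_iff₀ hD'.ne').2 (smul_polarDual_smul hD'), hP]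
    exact (hS.isCompact_convexHull (𝕜 := ℝ)).smul _
  have hlevel : sublevel N (D - 1) = {0} := by
    rw [← hP, interior_polarDual_inter_latticePts hF hD hN] at hint
    exact zpt_injective.image_injective (hint.trans (by simp [zpt]))
  obtain ⟨c, hc⟩ := hPIP
  rw [← hP] at hc
  obtain ⟨n, hn, hnw⟩ : (D : ℝ) • w ∈ zpt '' N := hN ▸ smul_mem_smul_set hw
  obtain ⟨u, hu, rfl⟩ := exists_eq_smul_isCoprime_of_ncard_sublevel (finite_sublevel hcomp)
    (fun n hn ↦ isFacetNormal_of_image_zpt_eq hS hD hE hN hM hn) hD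
    (fun t ht ↦ by rw [← hc t ht, ehr_polarDual hD hN ht])
    (hlevel.trans (sublevel_zero_eq (finite_sublevel hcomp 0)).symm) hn
  exact ⟨u, hu, smul_right_injective _ hD'.ne' ((zpt_smul D u).symm.trans hnw)⟩

lemma exists_polarDual_eq_convexHull_zpt (hS : S.Finite) (h0 : 0 ∈ interior (convexHull ℝ S))
    (hedge : ∀ E, IsEdge (convexHull ℝ S) E → ∃ u : ℤ × ℤ, ∀ a ∈ E, dotR (zpt u) a = 1) :
    ∃ V : Finset (ℤ × ℤ), polarDual S = convexHull ℝ (zpt '' V) := by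
  suffices (polarDual S).extremePoints ℝ ⊆ range zpt by
    obtain ⟨V, hV⟩ := exists_finset_image_eq (finite_extremePoints_polarDual hS) this
    exact ⟨V, hV ▸ polarDual_eq_convexHull_extremePoints hS h0⟩
  intro w hw
  obtain ⟨a, ha, b, hb, hab, hwa, hwb⟩ := exists_ne_dotR_eq_one_of_mem_extremePoints hS hw
  replace ha := subset_convexHull ℝ S ha
  replace hb := subset_convexHull ℝ S hb
  obtain ⟨u, hu⟩ := hedge _ <| isEdge_setOf_dotR_eq_one (polarDual_convexHull (S := S) ▸ hw.1)
    ha hb hab hwa hwb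
  exact ⟨u, (eq_linePole hab (hu a ⟨ha, hwa⟩) (hu b ⟨hb, hwb⟩)).trans
    (eq_linePole hab hwa hwb).symm⟩

lemma interior_inter_latticePts_eq_of_polarDual_eq {P : Set (ℝ × ℝ)} {V : Finset (ℤ × ℤ)}
    (hcomp : IsCompact P) (hconv : Convex ℝ P) (h0 : 0 ∈ P)
    (hV : polarDual P = convexHull ℝ (zpt '' V)) : interior P ∩ latticePts = {(0, 0)} := by
  have hP : polarDual (zpt '' V) = P := by
    rw [← polarDual_convexHull, ← hV, polarDual_polarDual hconv hcomp.isClosed h0]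
  have hone : zpt '' V = ((1 : ℤ) : ℝ) • zpt '' V := by rw [Int.cast_one, one_smul]
  rw [← hP, interior_polarDual_inter_latticePts (V.finite_toSet.image zpt) one_pos hone, sub_self,
    sublevel_zero_eq (finite_sublevel (hP ▸ hcomp) 0)]
  simp [zpt]

end LatticePoints

/-- for a rational pseudointegral convex polygon `P` with `0` in
its interior, the following are equivalent: (i) the only interior lattice point
is the origin; (ii) every edge lies on a line `⟨u,·⟩ = 1` for a primitive
integral vector `u` with `⟨u,·⟩ ≤ 1` on `P`; (iii) the dual polygon
`P° = {u : ⟨u,a⟩ ≤ 1 ∀ a ∈ P}` is the convex hull of finitely many lattice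
points. -/
theorem stmt_14 (P : Set (ℝ × ℝ)) (hP : IsRatPolygon P) (hPIP : IsPIP P)
    (h0 : (0 : ℝ × ℝ) ∈ interior P) :
    List.TFAE
      [interior P ∩ latticePts = {(0, 0)},
       ∀ E : Set (ℝ × ℝ), IsEdge P E →
         ∃ u : ℤ × ℤ, IsCoprime u.1 u.2 ∧ (∀ a ∈ E, dotR (zpt u) a = 1) ∧
           ∀ p ∈ P, dotR (zpt u) p ≤ 1,
       ∃ V : Finset (ℤ × ℤ),
         {u : ℝ × ℝ | ∀ a ∈ P, dotR u a ≤ 1} =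
           convexHull ℝ (zpt '' (V : Set (ℤ × ℤ)))] := by
  obtain ⟨V, rfl, -⟩ := hP
  have hV : (qpt '' (V : Set (ℚ × ℚ))).Finite := V.finite_toSet.image qpt
  rw [← polarDual, polarDual_convexHull]
  tfae_have 1 → 2 := fun hint E hE ↦ by
    obtain ⟨w, hw, hwE⟩ := exists_mem_extremePoints_polarDual_of_isEdge h0 hE
    rw [polarDual_convexHull] at hw
    obtain ⟨u, hu, rfl⟩ := exists_isCoprime_zpt_eq_of_mem_extremePoints hV (image_subset_range _ _)
      h0 hPIP hint hw
    exact ⟨u, hu, hwE, polarDual_convexHull.ge hw.1⟩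
  tfae_have 2 → 3 := fun hedge ↦ exists_polarDual_eq_convexHull_zpt hV h0 fun E hE ↦
    (hedge E hE).imp fun _ hu ↦ hu.2.1
  tfae_have 3 → 1 := by
    rintro ⟨U, hU⟩
    exact interior_inter_latticePts_eq_of_polarDual_eq (hV.isCompact_convexHull (𝕜 := ℝ))
      (convex_convexHull ℝ _) (interior_subset h0) (polarDual_convexHull.trans hU)
  tfae_finish
end
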